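/- For every palette 𝒫 there exists a family ℱ of 3-graphs with π_▽(ℱ) = Λ^▽_𝒫; that is, Λ^pal_▽ ⊆ Π^(3)_{▽,∞}. -/

import Mathlib

/-!
The family is `𝓕 = {F | ¬ Satisfies F P}`. Satisfying a palette passes to subhypergraphs, so the
`𝓕`-free 3-graphs are exactly those satisfying `P`, and the claim is that these can have uniform
density up to the palette Lagrangian, but no more.

Upper bound (`density_le`). Let `H` be a large dense 3-graph satisfying `P`, with its vertex order
and its colouring of pairs. Cut the order into many intervals, and shrink them until every colour
class is regular, in the sense of `CutReg`, between any two of them (`exists_cutReg_all`). The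
rounded vector of colour densities is a finite colouring of the pairs of intervals, so Ramsey's
theorem (`exists_mono_triangle`) gives three intervals with almost the same density vector `x` on
all three pairs. Triangle counting (`triangle_count_le`) bounds the number of edges across them by
about `lamVVV P x` times the product of their sizes; as `x` is nearly a weighting, this is at most
about `LambdaVVV P`.

Lower bound (`exists_dense_of_colFreq`, `exists_colFreq_gt`). A weighting is approximated by the
colour frequencies of a finite list `g : Q → ℕ`. An explicit orthogonality construction
(`exists_quasirandom`) colours the pairs of `range (K * s)` lying in different blocks by `Q` so that
every element of `Q` is quasirandom with density `1 / |Q|`. Taking as edges the triples in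
increasing blocks whose colours form a triple of `P` gives a 3-graph satisfying `P`, and telescoping
(`triangle_count_ge`) shows that its density between any three vertex sets is `lamVVV P` of the
frequencies, up to the triples meeting a block twice.

For `P = ∅` there is no weighting, so `LambdaVVV ∅ = sSup ∅ = 0`, and the family of all 3-graphs
has `piVVV` equal to `0` as well.
-/

open Finset

/-- A 3-uniform hypergraph: a finite vertex set (of naturals) together with a set of
3-element subsets of it as edges. -/
structure ThreeGraph where
  verts : Finset ℕ
  edges : Finset (Finset ℕ)
  edge_sub : ∀ e ∈ edges, e ⊆ verts
  edge_card : ∀ e ∈ edges, e.card = 3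

/-- `F` occurs as a subhypergraph of `H`. -/
def IsSubhypergraph (F H : ThreeGraph) : Prop :=
  ∃ f : ℕ → ℕ, Set.InjOn f ↑F.verts ∧ (∀ v ∈ F.verts, f v ∈ H.verts) ∧
    ∀ e ∈ F.edges, e.image f ∈ H.edges

noncomputable section

/-- Number of triples `(x,y,z) ∈ X × Y × Z` with `{x,y,z}` an edge of `H`. -/
def eVVV (H : ThreeGraph) (X Y Z : Finset ℕ) : ℕ :=
  ((X ×ˢ Y ×ˢ Z).filter fun p => ({p.1, p.2.1, p.2.2} : Finset ℕ) ∈ H.edges).card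

/-- `H` is `(d,η,▽)`-dense. -/
def IsDenseVVV (H : ThreeGraph) (d η : ℝ) : Prop :=
  ∀ X Y Z : Finset ℕ, X ⊆ H.verts → Y ⊆ H.verts → Z ⊆ H.verts →
    (eVVV H X Y Z : ℝ) ≥ d * X.card * Y.card * Z.card - η * (H.verts.card : ℝ) ^ 3

/-- Number of ordered triples `(x,y,z)` with `x ∈ X`, `{y,z} ∈ P` and `{x,y,z}` an edge. -/
def eEV (H : ThreeGraph) (X : Finset ℕ) (P : Finset (Finset ℕ)) : ℕ :=
  ((X ×ˢ H.verts ×ˢ H.verts).filter fun p =>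
    ({p.2.1, p.2.2} : Finset ℕ) ∈ P ∧ ({p.1, p.2.1, p.2.2} : Finset ℕ) ∈ H.edges).card

/-- `H` is `(d,η,e↦v)`-dense. -/
def IsDenseEV (H : ThreeGraph) (d η : ℝ) : Prop :=
  ∀ (X : Finset ℕ) (P : Finset (Finset ℕ)), X ⊆ H.verts →
    (∀ p ∈ P, p ⊆ H.verts ∧ p.card = 2) →
    (eEV H X P : ℝ) ≥ d * X.card * P.card - η * (H.verts.card : ℝ) ^ 3

/-- `K_{ee}(P,Q)`: ordered triples `(x,y,z)` with `{x,y} ∈ P` and `{y,z} ∈ Q`. -/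
def KEE (H : ThreeGraph) (P Q : Finset (Finset ℕ)) : Finset (ℕ × ℕ × ℕ) :=
  (H.verts ×ˢ H.verts ×ˢ H.verts).filter fun p =>
    ({p.1, p.2.1} : Finset ℕ) ∈ P ∧ ({p.2.1, p.2.2} : Finset ℕ) ∈ Q

/-- Number of triples in `K_{ee}(P,Q)` forming an edge of `H`. -/
def eEE (H : ThreeGraph) (P Q : Finset (Finset ℕ)) : ℕ :=
  ((KEE H P Q).filter fun p => ({p.1, p.2.1, p.2.2} : Finset ℕ) ∈ H.edges).card

/-- `H` is `(d,η,ee)`-dense. -/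
def IsDenseEE (H : ThreeGraph) (d η : ℝ) : Prop :=
  ∀ P Q : Finset (Finset ℕ),
    (∀ p ∈ P, p ⊆ H.verts ∧ p.card = 2) → (∀ q ∈ Q, q ⊆ H.verts ∧ q.card = 2) →
    (eEE H P Q : ℝ) ≥ d * (KEE H P Q).card - η * (H.verts.card : ℝ) ^ 3

/-- The uniform Turán density `π_▽(𝓕)` of a family `𝓕` of 3-graphs. -/
def piVVV (𝓕 : Set ThreeGraph) : ℝ :=
  sSup {d : ℝ | 0 ≤ d ∧ d ≤ 1 ∧ ∀ η : ℝ, 0 < η → ∀ n : ℕ,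
    ∃ H : ThreeGraph, n ≤ H.verts.card ∧ (∀ F ∈ 𝓕, ¬ IsSubhypergraph F H) ∧
      IsDenseVVV H d η}

/-- The uniform Turán density `π_{e↦v}(𝓕)` of a family `𝓕` of 3-graphs. -/
def piEV (𝓕 : Set ThreeGraph) : ℝ :=
  sSup {d : ℝ | 0 ≤ d ∧ d ≤ 1 ∧ ∀ η : ℝ, 0 < η → ∀ n : ℕ,
    ∃ H : ThreeGraph, n ≤ H.verts.card ∧ (∀ F ∈ 𝓕, ¬ IsSubhypergraph F H) ∧
      IsDenseEV H d η}

/-- The uniform Turán density `π_{ee}(𝓕)` of a family `𝓕` of 3-graphs. -/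
def piEE (𝓕 : Set ThreeGraph) : ℝ :=
  sSup {d : ℝ | 0 ≤ d ∧ d ≤ 1 ∧ ∀ η : ℝ, 0 < η → ∀ n : ℕ,
    ∃ H : ThreeGraph, n ≤ H.verts.card ∧ (∀ F ∈ 𝓕, ¬ IsSubhypergraph F H) ∧
      IsDenseEE H d η}

/-- A palette: a finite set of ordered triples of natural numbers (colours). -/
abbrev Palette := Finset (ℕ × ℕ × ℕ)

/-- The set of colours `Φ(𝒫)` of a palette. -/
def palColours (P : Palette) : Finset ℕ :=
  P.image (·.1) ∪ P.image (·.2.1) ∪ P.image (·.2.2)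

/-- A weighting of a palette: nonnegative weights on the colours summing to 1. -/
def IsWeighting (P : Palette) (x : ℕ → ℝ) : Prop :=
  (∀ a ∈ palColours P, 0 ≤ x a) ∧ ∑ a ∈ palColours P, x a = 1

/-- `λ^▽_𝒫(x) = Σ_{(a,b,c) ∈ 𝒫} x_a x_b x_c`. -/
def lamVVV (P : Palette) (x : ℕ → ℝ) : ℝ :=
  ∑ p ∈ P, x p.1 * x p.2.1 * x p.2.2

/-- The palette Lagrangian `Λ^▽_𝒫`. -/
def LambdaVVV (P : Palette) : ℝ :=
  sSup {l : ℝ | ∃ x : ℕ → ℝ, IsWeighting P x ∧ l = lamVVV P x}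

/-- The ordered degree Lagrangian `λ^a_𝒫(x)`. -/
def lamDeg (P : Palette) (a : ℕ) (x : ℕ → ℝ) : ℝ :=
  min (min (∑ p ∈ P.filter (fun p => p.1 = a), x p.2.1 * x p.2.2)
           (∑ p ∈ P.filter (fun p => p.2.1 = a), x p.1 * x p.2.2))
      (∑ p ∈ P.filter (fun p => p.2.2 = a), x p.1 * x p.2.1)

/-- `λ^{e↦v}_𝒫(x)`: minimum of `λ^a_𝒫(x)` over colours `a` with positive weight. -/
def lamEV (P : Palette) (x : ℕ → ℝ) : ℝ :=
  sInf {l : ℝ | ∃ a ∈ palColours P, 0 < x a ∧ l = lamDeg P a x}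

/-- The palette Lagrangian `Λ^{e↦v}_𝒫`. -/
def LambdaEV (P : Palette) : ℝ :=
  sSup {l : ℝ | ∃ x : ℕ → ℝ, IsWeighting P x ∧ l = lamEV P x}

/-- The ordered codegree Lagrangian `λ^{a,b}_𝒫(x)`. -/
def lamCodeg (P : Palette) (a b : ℕ) (x : ℕ → ℝ) : ℝ :=
  min (min (min (∑ p ∈ P.filter (fun p => p.1 = a ∧ p.2.1 = b), x p.2.2)
                (∑ p ∈ P.filter (fun p => p.1 = b ∧ p.2.1 = a), x p.2.2))
           (min (∑ p ∈ P.filter (fun p => p.1 = a ∧ p.2.2 = b), x p.2.1)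
                (∑ p ∈ P.filter (fun p => p.1 = b ∧ p.2.2 = a), x p.2.1)))
      (min (∑ p ∈ P.filter (fun p => p.2.1 = a ∧ p.2.2 = b), x p.1)
           (∑ p ∈ P.filter (fun p => p.2.1 = b ∧ p.2.2 = a), x p.1))

/-- `λ^{ee}_𝒫(x)`: minimum of `λ^{a,b}_𝒫(x)` over colours `a,b` with positive weight. -/
def lamEE (P : Palette) (x : ℕ → ℝ) : ℝ :=
  sInf {l : ℝ | ∃ a ∈ palColours P, ∃ b ∈ palColours P, 0 < x a * x b ∧ l = lamCodeg P a b x}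

/-- The palette Lagrangian `Λ^{ee}_𝒫`. -/
def LambdaEE (P : Palette) : ℝ :=
  sSup {l : ℝ | ∃ x : ℕ → ℝ, IsWeighting P x ∧ l = lamEE P x}

/-- A 3-graph `H` satisfies a palette `P`: there is an ordering of the vertices (an
injection `ord` into `ℕ`) and a colouring `φ` of the pairs of vertices with colours in
`Φ(P)` such that the ordered shadow of every edge is a triple of the palette. -/
def Satisfies (H : ThreeGraph) (P : Palette) : Prop :=
  ∃ (ord : ℕ → ℕ) (φ : Finset ℕ → ℕ),
    Set.InjOn ord ↑H.verts ∧
    (∀ u ∈ H.verts, ∀ v ∈ H.verts, u ≠ v → φ {u, v} ∈ palColours P) ∧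
    ∀ u v w : ℕ, ({u, v, w} : Finset ℕ) ∈ H.edges →
      ord u < ord v → ord v < ord w →
      (φ {u, v}, φ {v, w}, φ {u, w}) ∈ P

/-- Delete a set of edges from a 3-graph. -/
def ThreeGraph.deleteEdges (H : ThreeGraph) (R : Finset (Finset ℕ)) : ThreeGraph where
  verts := H.verts
  edges := H.edges \ R
  edge_sub := fun e he => H.edge_sub e (Finset.mem_sdiff.mp he).1
  edge_card := fun e he => H.edge_card e (Finset.mem_sdiff.mp he).1

/-- `H` α-almost satisfies `P`: one can remove at most `α·|V(H)|³` edges so that the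
resulting 3-graph satisfies `P`. -/
def AlmostSatisfies (H : ThreeGraph) (P : Palette) (α : ℝ) : Prop :=
  ∃ R ⊆ H.edges, (R.card : ℝ) ≤ α * (H.verts.card : ℝ) ^ 3 ∧
    Satisfies (H.deleteEdges R) P

/-- The Lagrange polynomial `λ_F(x) = 3! Σ_{e ∈ E(F)} Π_{v ∈ e} x_v` of a 3-graph. -/
def lagrangePoly (F : ThreeGraph) (x : ℕ → ℝ) : ℝ :=
  6 * ∑ e ∈ F.edges, ∏ v ∈ e, x v

/-- The Lagrangian `Λ_F` of a 3-graph: the supremum of the Lagrange polynomial over the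
standard simplex on the vertices. -/
def lagrangian (F : ThreeGraph) : ℝ :=
  sSup {l : ℝ | ∃ x : ℕ → ℝ, (∀ v ∈ F.verts, 0 ≤ x v ∧ x v ≤ 1) ∧
    (∑ v ∈ F.verts, x v = 1) ∧ l = lagrangePoly F x}

end

/-! ### A multicolour Ramsey theorem for triangles -/

theorem exists_mono_triangle {κ : Type*} [DecidableEq κ] (n : ℕ) :
    ∃ M : ℕ, ∀ (C : Finset κ), C.card = n → ∀ (S : Finset ℕ), M ≤ S.card →
      ∀ χ : ℕ → ℕ → κ, (∀ i ∈ S, ∀ j ∈ S, i < j → χ i j ∈ C) →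
        ∃ i ∈ S, ∃ j ∈ S, ∃ l ∈ S, i < j ∧ j < l ∧ χ j l = χ i j ∧ χ i l = χ i j := by
  induction n with
  | zero =>
    refine ⟨2, fun C hC S hS χ hχ => ?_⟩
    obtain ⟨a, ha, b, hb, hab⟩ := Finset.one_lt_card.mp (by omega : 1 < S.card)
    rw [Finset.card_eq_zero] at hC
    subst hC
    rcases lt_or_gt_of_ne hab with h | h
    · exact absurd (hχ a ha b hb h) (by simp)
    · exact absurd (hχ b hb a ha h) (by simp)
  | succ n ih =>
    obtain ⟨M, hM⟩ := ih
    refine ⟨(n + 1) * M + 2, fun C hC S hS χ hχ => ?_⟩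
    have hne : S.Nonempty := by
      rw [← Finset.card_pos]; omega
    set i₀ := S.min' hne with hi₀
    have hi₀S : i₀ ∈ S := S.min'_mem hne
    have hlt : ∀ j ∈ S.erase i₀, i₀ < j := fun j hj => S.min'_lt_of_mem_erase_min' hne hj
    have hcard : C.card * M < (S.erase i₀).card := by
      rw [Finset.card_erase_of_mem hi₀S, hC]; omega
    obtain ⟨c, hc, hfib⟩ := Finset.exists_lt_card_fiber_of_mul_lt_card_of_maps_to
      (f := fun j => χ i₀ j) (s := S.erase i₀) (t := C)
      (fun j hj => hχ i₀ hi₀S j (Finset.mem_of_mem_erase hj) (hlt j hj)) hcard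
    set T := (S.erase i₀).filter (fun j => χ i₀ j = c) with hT
    have hTS : ∀ j ∈ T, j ∈ S ∧ i₀ < j ∧ χ i₀ j = c := fun j hj => by
      rw [hT, Finset.mem_filter] at hj
      exact ⟨Finset.mem_of_mem_erase hj.1, hlt j hj.1, hj.2⟩
    by_cases h : ∃ i ∈ T, ∃ j ∈ T, i < j ∧ χ i j = c
    · obtain ⟨i, hi, j, hj, hij, hcij⟩ := h
      exact ⟨i₀, hi₀S, i, (hTS i hi).1, j, (hTS j hj).1, (hTS i hi).2.1, hij,
        by rw [hcij, (hTS i hi).2.2], by rw [(hTS j hj).2.2, (hTS i hi).2.2]⟩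
    · push Not at h
      obtain ⟨i, hi, j, hj, l, hl, hh⟩ := hM (C.erase c)
        (by rw [Finset.card_erase_of_mem hc, hC]; rfl) T hfib.le χ
        (fun i hi j hj hij => Finset.mem_erase.mpr
          ⟨h i hi j hj hij, hχ i (hTS i hi).1 j (hTS j hj).1 hij⟩)
      exact ⟨i, (hTS i hi).1, j, (hTS j hj).1, l, (hTS l hl).1, hh⟩

/-! ### Regular pairs by density increment -/

/-- The total weight of `g` between `A` and `B`; for the indicator function `g` of a colour this
is the number of pairs in `A × B` having that colour. -/
noncomputable def wt (g : ℕ → ℕ → ℝ) (A B : Finset ℕ) : ℝ := ∑ u ∈ A, ∑ v ∈ B, g u v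

theorem wt_nonneg {g : ℕ → ℕ → ℝ} (h0 : ∀ u v, 0 ≤ g u v) (A B : Finset ℕ) : 0 ≤ wt g A B :=
  Finset.sum_nonneg fun _ _ => Finset.sum_nonneg fun _ _ => h0 _ _

theorem wt_le {g : ℕ → ℕ → ℝ} (h1 : ∀ u v, g u v ≤ 1) (A B : Finset ℕ) :
    wt g A B ≤ A.card * B.card := by
  unfold wt
  calc ∑ u ∈ A, ∑ v ∈ B, g u v ≤ ∑ u ∈ A, ∑ v ∈ B, (1 : ℝ) :=
        Finset.sum_le_sum fun _ _ => Finset.sum_le_sum fun _ _ => h1 _ _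
    _ = A.card * B.card := by simp

/-- The pair `(X, Y)` is `ε`-regular for `g` in the cut-norm sense: every `A ⊆ X`, `B ⊆ Y` carries
weight `d |A| |B|` up to an error `ε |X| |Y|`. -/
def CutReg (g : ℕ → ℕ → ℝ) (ε d : ℝ) (X Y : Finset ℕ) : Prop :=
  ∀ A ⊆ X, ∀ B ⊆ Y, |wt g A B - d * A.card * B.card| ≤ ε * X.card * Y.card

/-- The density increment step: a pair of density `d` which is not one-sidedly `ε`-regular contains
a pair of density at least `d + ε`, with both sides at least an `ε`-proportion. -/
theorem upper_reg_or_increment {ε : ℝ} (hε : 0 < ε) {g : ℕ → ℕ → ℝ}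
    (h0 : ∀ u v, 0 ≤ g u v) (h1 : ∀ u v, g u v ≤ 1) {X Y : Finset ℕ}
    (hX : X.Nonempty) (hY : Y.Nonempty) :
    ∃ d : ℝ, 0 ≤ d ∧ wt g X Y = d * X.card * Y.card ∧
      ((∀ A ⊆ X, ∀ B ⊆ Y, wt g A B ≤ d * A.card * B.card + ε * X.card * Y.card) ∨
        ∃ A ⊆ X, ∃ B ⊆ Y, A.Nonempty ∧ B.Nonempty ∧ ε * X.card ≤ A.card ∧ ε * Y.card ≤ B.card ∧
          (d + ε) * A.card * B.card ≤ wt g A B) := by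
  have hXp : (0 : ℝ) < X.card := by exact_mod_cast hX.card_pos
  have hYp : (0 : ℝ) < Y.card := by exact_mod_cast hY.card_pos
  have hd0 : 0 ≤ wt g X Y / (X.card * Y.card) :=
    div_nonneg (wt_nonneg h0 _ _) (mul_pos hXp hYp).le
  refine ⟨wt g X Y / (X.card * Y.card), hd0, by field_simp, ?_⟩
  generalize wt g X Y / (X.card * Y.card) = d at hd0 ⊢
  refine or_iff_not_imp_left.mpr fun hreg => ?_
  push Not at hreg
  obtain ⟨A, hA, B, hB, hAB⟩ := hreg
  have hAX : (A.card : ℝ) ≤ X.card := by exact_mod_cast Finset.card_le_card hA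
  have hBY : (B.card : ℝ) ≤ Y.card := by exact_mod_cast Finset.card_le_card hB
  have hA0 : (0 : ℝ) ≤ A.card := Nat.cast_nonneg _
  have hB0 : (0 : ℝ) ≤ B.card := Nat.cast_nonneg _
  have hle := wt_le h1 A B
  have hdAB : 0 ≤ d * A.card * B.card := by positivity
  have hbig : ε * X.card * Y.card < A.card * B.card := by linarith
  have hAbig : ε * X.card ≤ A.card := by
    by_contra hc
    push Not at hc
    have : (A.card : ℝ) * B.card ≤ ε * X.card * Y.card :=
      mul_le_mul hc.le hBY hB0 (by positivity)
    linarith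
  have hBbig : ε * Y.card ≤ B.card := by
    by_contra hc
    push Not at hc
    have : (A.card : ℝ) * B.card ≤ X.card * (ε * Y.card) :=
      mul_le_mul hAX hc.le hB0 (by positivity)
    linarith
  have hAp : 0 < A.card := by
    have : (0 : ℝ) < A.card := lt_of_lt_of_le (by positivity) hAbig
    exact_mod_cast this
  have hBp : 0 < B.card := by
    have : (0 : ℝ) < B.card := lt_of_lt_of_le (by positivity) hBbig
    exact_mod_cast this
  have h3 : ε * (A.card * B.card) ≤ ε * (X.card * Y.card) :=
    mul_le_mul_of_nonneg_left (mul_le_mul hAX hBY hB0 hXp.le) hε.le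
  exact ⟨A, hA, B, hB, Finset.card_pos.mp hAp, Finset.card_pos.mp hBp, hAbig, hBbig,
    by linarith⟩

/-- Densities are at most `1`, so from density `1 - n ε` at most `n` density increments are
possible. -/
theorem exists_upper_reg {ε : ℝ} (hε : 0 < ε) (hε1 : ε ≤ 1) {g : ℕ → ℕ → ℝ}
    (h0 : ∀ u v, 0 ≤ g u v) (h1 : ∀ u v, g u v ≤ 1) (n : ℕ) :
    ∀ X Y : Finset ℕ, X.Nonempty → Y.Nonempty →
      (1 - n * ε) * X.card * Y.card ≤ wt g X Y →
      ∃ X' ⊆ X, ∃ Y' ⊆ Y, ε ^ n * X.card ≤ X'.card ∧ ε ^ n * Y.card ≤ Y'.card ∧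
        ∃ d : ℝ, 0 ≤ d ∧ wt g X' Y' = d * X'.card * Y'.card ∧
          ∀ A ⊆ X', ∀ B ⊆ Y', wt g A B ≤ d * A.card * B.card + ε * X'.card * Y'.card := by
  induction n with
  | zero =>
    intro X Y hX hY h
    refine ⟨X, subset_rfl, Y, subset_rfl, by simp, by simp, 1, zero_le_one, ?_, ?_⟩
    · apply le_antisymm
      · simpa using wt_le h1 X Y
      · simpa using h
    · intro A _ B _
      have := wt_le h1 A B
      have : 0 ≤ ε * X.card * Y.card := by positivity
      linarith
  | succ n ih =>
    intro X Y hX hY h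
    have hXp : (0 : ℝ) < X.card := by exact_mod_cast hX.card_pos
    have hYp : (0 : ℝ) < Y.card := by exact_mod_cast hY.card_pos
    have hpn : 0 ≤ ε ^ n := pow_nonneg hε.le n
    obtain ⟨d, hd0, hdeq, hreg | ⟨A, hA, B, hB, hAne, hBne, hAbig, hBbig, hAB⟩⟩ :=
      upper_reg_or_increment hε h0 h1 hX hY
    · have hp : ε ^ (n + 1) ≤ 1 := pow_le_one₀ hε.le hε1
      exact ⟨X, subset_rfl, Y, subset_rfl, mul_le_of_le_one_left hXp.le hp,
        mul_le_of_le_one_left hYp.le hp, d, hd0, hdeq, hreg⟩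
    · have hdlow : 1 - (n + 1) * ε ≤ d := by
        refine le_of_mul_le_mul_right ?_ (mul_pos hXp hYp)
        push_cast at h
        linarith
      have hdens : (1 - n * ε) * A.card * B.card ≤ wt g A B := by
        have h2 : (1 - n * ε) * (A.card * B.card) ≤ (d + ε) * (A.card * B.card) :=
          mul_le_mul_of_nonneg_right (by linarith)
            (mul_nonneg (Nat.cast_nonneg _) (Nat.cast_nonneg _))
        linarith
      obtain ⟨X', hX', Y', hY', hcX, hcY, hrest⟩ := ih A B hAne hBne hdens
      refine ⟨X', hX'.trans hA, Y', hY'.trans hB, ?_, ?_, hrest⟩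
      · calc ε ^ (n + 1) * X.card = ε ^ n * (ε * X.card) := by ring
          _ ≤ ε ^ n * A.card := mul_le_mul_of_nonneg_left hAbig hpn
          _ ≤ _ := hcX
      · calc ε ^ (n + 1) * Y.card = ε ^ n * (ε * Y.card) := by ring
          _ ≤ ε ^ n * B.card := mul_le_mul_of_nonneg_left hBbig hpn
          _ ≤ _ := hcY

/-- One-sided regularity gives two-sided regularity by passing to complements:
`A × B` is `X × Y` minus `(X \ A) × Y` minus `A × (Y \ B)`. -/
theorem exists_cutReg {ε : ℝ} (hε : 0 < ε) (hε1 : ε ≤ 1) :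
    ∃ δ : ℝ, 0 < δ ∧ δ ≤ 1 ∧ ∀ g : ℕ → ℕ → ℝ, (∀ u v, 0 ≤ g u v) → (∀ u v, g u v ≤ 1) →
      ∀ X Y : Finset ℕ, X.Nonempty → Y.Nonempty →
        ∃ X' ⊆ X, ∃ Y' ⊆ Y, δ * X.card ≤ X'.card ∧ δ * Y.card ≤ Y'.card ∧
          ∃ d : ℝ, 0 ≤ d ∧ CutReg g ε d X' Y' := by
  obtain ⟨n, hn⟩ := exists_nat_ge (1 / (ε / 2))
  refine ⟨(ε / 2) ^ n, by positivity, pow_le_one₀ (by positivity) (by linarith), ?_⟩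
  intro g h0 h1 X Y hX hY
  have hn' : 1 ≤ n * (ε / 2) := by
    rwa [div_le_iff₀ (by positivity)] at hn
  obtain ⟨X', hX', Y', hY', hcX, hcY, d, hd0, hdeq, hup⟩ :=
    exists_upper_reg (by positivity : 0 < ε / 2) (by linarith) h0 h1 n X Y hX hY
      ((mul_nonpos_of_nonpos_of_nonneg (mul_nonpos_of_nonpos_of_nonneg (by linarith)
        (by positivity)) (by positivity)).trans (wt_nonneg h0 _ _))
  refine ⟨X', hX', Y', hY', hcX, hcY, d, hd0, ?_⟩
  intro A hA B hB
  have e1 : wt g (X' \ A) Y' + wt g A Y' = wt g X' Y' := Finset.sum_sdiff hA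
  have e2 : wt g A (Y' \ B) + wt g A B = wt g A Y' := by
    unfold wt
    rw [← Finset.sum_add_distrib]
    exact Finset.sum_congr rfl fun u _ => Finset.sum_sdiff hB
  have c1 : ((X' \ A).card : ℝ) = X'.card - A.card := by
    rw [Finset.cast_card_sdiff hA]
  have c2 : ((Y' \ B).card : ℝ) = Y'.card - B.card := by
    rw [Finset.cast_card_sdiff hB]
  have u0 := hup A hA B hB
  have u1 := hup (X' \ A) Finset.sdiff_subset Y' subset_rfl
  have u2 := hup A hA (Y' \ B) Finset.sdiff_subset
  rw [c1] at u1
  rw [c2] at u2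
  have hp : 0 ≤ ε * X'.card * Y'.card := by positivity
  rw [abs_le]
  constructor <;> nlinarith

/-- Passing to sub-pairs of proportion `δ` costs only a factor `δ⁻²` in the regularity
parameter and keeps the same density. -/
theorem CutReg.mono {g : ℕ → ℕ → ℝ} {ε ε' δ d : ℝ} {X Y X' Y' : Finset ℕ}
    (h : CutReg g ε' d X Y) (hε : ε' ≤ ε * (δ * δ)) (hε0 : 0 ≤ ε) (hδ : 0 ≤ δ)
    (hX : X' ⊆ X) (hY : Y' ⊆ Y) (hcX : δ * X.card ≤ X'.card) (hcY : δ * Y.card ≤ Y'.card) :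
    CutReg g ε d X' Y' := by
  intro A hA B hB
  refine (h A (hA.trans hX) B (hB.trans hY)).trans ?_
  calc ε' * X.card * Y.card ≤ (ε * (δ * δ)) * X.card * Y.card := by gcongr
    _ = ε * ((δ * X.card) * (δ * Y.card)) := by ring
    _ ≤ ε * (X'.card * Y'.card) := by gcongr
    _ = _ := by ring

/-- Finitely many pairs and colours can be regularised simultaneously, one after the other. -/
theorem exists_cutReg_all (T : Finset (ℕ × ℕ × ℕ)) (hT : ∀ t ∈ T, t.1 ≠ t.2.1) :
    ∀ ε : ℝ, 0 < ε → ε ≤ 1 → ∃ δ : ℝ, 0 < δ ∧ δ ≤ 1 ∧ ∀ g : ℕ → ℕ → ℕ → ℝ,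
      (∀ a u v, 0 ≤ g a u v) → (∀ a u v, g a u v ≤ 1) →
      ∀ V : ℕ → Finset ℕ, (∀ i, (V i).Nonempty) →
        ∃ V' : ℕ → Finset ℕ, (∀ i, V' i ⊆ V i) ∧ (∀ i, δ * (V i).card ≤ (V' i).card) ∧
          ∀ t ∈ T, ∃ d : ℝ, 0 ≤ d ∧ CutReg (g t.2.2) ε d (V' t.1) (V' t.2.1) := by
  induction T using Finset.induction_on with
  | empty =>
    intro ε _ _
    exact ⟨1, one_pos, le_rfl, fun g _ _ V _ => ⟨V, fun _ => subset_rfl, by simp, by simp⟩⟩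
  | insert t T _ ih =>
    intro ε hε hε1
    obtain ⟨δ₀, hδ₀, hδ₀1, hpair⟩ := exists_cutReg hε hε1
    have hsq : δ₀ * δ₀ ≤ 1 := mul_le_one₀ hδ₀1 hδ₀.le hδ₀1
    obtain ⟨δ₁, hδ₁, hδ₁1, hall⟩ := ih (fun s hs => hT s (Finset.mem_insert_of_mem hs))
      (ε * (δ₀ * δ₀)) (by positivity) (mul_le_one₀ hε1 (by positivity) hsq)
    refine ⟨δ₀ * δ₁, by positivity, mul_le_one₀ hδ₀1 hδ₁.le hδ₁1, ?_⟩
    intro g h0 h1 V hV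
    obtain ⟨W, hWV, hWc, hW⟩ := hall g h0 h1 V hV
    have hWne : ∀ i, (W i).Nonempty := fun i => by
      have h2 : (0 : ℝ) < (V i).card := by exact_mod_cast (hV i).card_pos
      have : (0 : ℝ) < (W i).card := lt_of_lt_of_le (by positivity) (hWc i)
      exact Finset.card_pos.mp (by exact_mod_cast this)
    obtain ⟨X', hX', Y', hY', hcX, hcY, d, hd0, hd⟩ :=
      hpair (g t.2.2) (h0 _) (h1 _) (W t.1) (W t.2.1) (hWne _) (hWne _)
    have hne := hT t (Finset.mem_insert_self _ _)
    set V' : ℕ → Finset ℕ := Function.update (Function.update W t.1 X') t.2.1 Y' with hV'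
    have hV1 : V' t.1 = X' := by simp [hV', Function.update_of_ne hne]
    have hV2 : V' t.2.1 = Y' := by simp [hV']
    have hV3 : ∀ i, i ≠ t.1 → i ≠ t.2.1 → V' i = W i := fun i h1 h2 => by
      simp [hV', Function.update_of_ne h1, Function.update_of_ne h2]
    have hsub : ∀ i, V' i ⊆ W i := fun i => by
      by_cases h1 : i = t.1
      · rw [h1, hV1]; exact hX'
      · by_cases h2 : i = t.2.1
        · rw [h2, hV2]; exact hY'
        · rw [hV3 i h1 h2]
    have hcard : ∀ i, δ₀ * (W i).card ≤ (V' i).card := fun i => by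
      by_cases h1 : i = t.1
      · rw [h1, hV1]; exact hcX
      · by_cases h2 : i = t.2.1
        · rw [h2, hV2]; exact hcY
        · rw [hV3 i h1 h2]
          exact mul_le_of_le_one_left (by positivity) hδ₀1
    refine ⟨V', fun i => (hsub i).trans (hWV i), fun i => ?_, ?_⟩
    · calc δ₀ * δ₁ * (V i).card = δ₀ * (δ₁ * (V i).card) := by ring
        _ ≤ δ₀ * (W i).card := mul_le_mul_of_nonneg_left (hWc i) hδ₀.le
        _ ≤ _ := hcard i
    · intro s hs
      rcases Finset.mem_insert.mp hs with rfl | hs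
      · exact ⟨d, hd0, by rw [hV1, hV2]; exact hd⟩
      · obtain ⟨d', hd'0, hd'⟩ := hW s hs
        exact ⟨d', hd'0, hd'.mono le_rfl hε.le hδ₀.le (hsub _) (hsub _) (hcard _) (hcard _)⟩

/-! ### Counting coloured triangles in regular triples -/

/-- The indicator function of the colour `a` in the colouring `k` of pairs. -/
noncomputable def colInd (k : ℕ → ℕ → ℕ) (a u v : ℕ) : ℝ := if k u v = a then 1 else 0

theorem colInd_nonneg (k : ℕ → ℕ → ℕ) (a u v : ℕ) : 0 ≤ colInd k a u v := by
  unfold colInd; split_ifs <;> norm_num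

theorem colInd_le_one (k : ℕ → ℕ → ℕ) (a u v : ℕ) : colInd k a u v ≤ 1 := by
  unfold colInd; split_ifs <;> norm_num

/-- The triangles are counted by fixing `w ∈ Z` and using regularity of `(X, Y)` on the two
neighbourhoods of `w`; the resulting cherries are counted by fixing `u ∈ X` and using regularity
of `(Y, Z)`. -/
theorem triangle_count_le {k : ℕ → ℕ → ℕ} {a b c : ℕ} {X Y Z : Finset ℕ} {ε Ua Ub Uc : ℝ}
    (hUa : 0 ≤ Ua) (hUb : 0 ≤ Ub)
    (ha : ∀ A ⊆ X, ∀ B ⊆ Y,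
      wt (colInd k a) A B ≤ Ua * A.card * B.card + ε * X.card * Y.card)
    (hb : ∀ A ⊆ Y, ∀ B ⊆ Z,
      wt (colInd k b) A B ≤ Ub * A.card * B.card + ε * Y.card * Z.card)
    (hc : wt (colInd k c) X Z ≤ Uc * X.card * Z.card + ε * X.card * Z.card) :
    ∑ u ∈ X, ∑ v ∈ Y, ∑ w ∈ Z, colInd k a u v * colInd k b v w * colInd k c u w ≤
      (Ua * (Ub * (Uc + ε) + ε) + ε) * (X.card * Y.card * Z.card) := by
  have card_eq : ∀ (S : Finset ℕ) (p : ℕ → Prop) [DecidablePred p],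
      ((S.filter p).card : ℝ) = ∑ v ∈ S, if p v then (1 : ℝ) else 0 := by
    intro S p _
    simp
  have e1 : ∑ u ∈ X, ∑ v ∈ Y, ∑ w ∈ Z, colInd k a u v * colInd k b v w * colInd k c u w =
      ∑ w ∈ Z, wt (colInd k a) (X.filter fun u => k u w = c) (Y.filter fun v => k v w = b) := by
    have : ∀ u ∈ X, ∑ v ∈ Y, ∑ w ∈ Z, colInd k a u v * colInd k b v w * colInd k c u w =
        ∑ w ∈ Z, ∑ v ∈ Y, colInd k a u v * colInd k b v w * colInd k c u w :=
      fun u _ => Finset.sum_comm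
    rw [Finset.sum_congr rfl this, Finset.sum_comm]
    refine Finset.sum_congr rfl fun w _ => ?_
    unfold wt
    rw [Finset.sum_filter]
    refine Finset.sum_congr rfl fun u _ => ?_
    by_cases h : k u w = c
    · rw [if_pos h, Finset.sum_filter]
      refine Finset.sum_congr rfl fun v _ => ?_
      simp [colInd, h]
    · rw [if_neg h]
      refine Finset.sum_eq_zero fun v _ => ?_
      simp [colInd, h]
  have e2 : ∑ w ∈ Z, ((X.filter fun u => k u w = c).card : ℝ) *
        (Y.filter fun v => k v w = b).card =
      ∑ u ∈ X, wt (colInd k b) Y (Z.filter fun w => k u w = c) := by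
    simp_rw [card_eq, Finset.sum_mul_sum]
    rw [Finset.sum_comm]
    refine Finset.sum_congr rfl fun u _ => ?_
    unfold wt
    rw [Finset.sum_comm]
    refine Finset.sum_congr rfl fun v _ => ?_
    rw [Finset.sum_filter]
    refine Finset.sum_congr rfl fun w _ => ?_
    by_cases h : k u w = c <;> simp [colInd, h]
  have e3 : ∑ u ∈ X, ((Z.filter fun w => k u w = c).card : ℝ) = wt (colInd k c) X Z := by
    simp_rw [card_eq]; rfl
  have i2 : ∑ u ∈ X, wt (colInd k b) Y (Z.filter fun w => k u w = c) ≤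
      Ub * Y.card * wt (colInd k c) X Z + ε * X.card * Y.card * Z.card := by
    rw [← e3, Finset.mul_sum]
    calc _ ≤ ∑ u ∈ X, (Ub * Y.card * ((Z.filter fun w => k u w = c).card : ℝ) +
            ε * Y.card * Z.card) :=
          Finset.sum_le_sum fun u _ => hb Y subset_rfl _ (Finset.filter_subset _ _)
      _ = _ := by
          rw [Finset.sum_add_distrib, Finset.sum_const, nsmul_eq_mul]; ring
  have i1 : ∑ w ∈ Z, wt (colInd k a) (X.filter fun u => k u w = c) (Y.filter fun v => k v w = b) ≤
      Ua * (∑ w ∈ Z, ((X.filter fun u => k u w = c).card : ℝ) *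
        (Y.filter fun v => k v w = b).card) + ε * X.card * Y.card * Z.card := by
    rw [Finset.mul_sum]
    calc _ ≤ ∑ w ∈ Z, (Ua * (((X.filter fun u => k u w = c).card : ℝ) *
            (Y.filter fun v => k v w = b).card) + ε * X.card * Y.card) :=
          Finset.sum_le_sum fun w _ => by
            rw [← mul_assoc]
            exact ha _ (Finset.filter_subset _ _) _ (Finset.filter_subset _ _)
      _ = _ := by
          rw [Finset.sum_add_distrib, Finset.sum_const, nsmul_eq_mul]; ring
  rw [e1]
  refine i1.trans ?_
  rw [e2]
  have i3 := mul_le_mul_of_nonneg_left hc (mul_nonneg hUb (Nat.cast_nonneg (α := ℝ) Y.card))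
  have i4 := mul_le_mul_of_nonneg_left (i2.trans (add_le_add_left i3 _)) hUa
  linarith

/-! ### The palette Lagrangian -/

theorem mem_palColours {P : Palette} {p : ℕ × ℕ × ℕ} (hp : p ∈ P) :
    p.1 ∈ palColours P ∧ p.2.1 ∈ palColours P ∧ p.2.2 ∈ palColours P := by
  unfold palColours
  simp only [Finset.mem_union, Finset.mem_image]
  exact ⟨Or.inl (Or.inl ⟨p, hp, rfl⟩), Or.inl (Or.inr ⟨p, hp, rfl⟩), Or.inr ⟨p, hp, rfl⟩⟩

theorem lamVVV_nonneg {P : Palette} {x : ℕ → ℝ} (hx : ∀ a ∈ palColours P, 0 ≤ x a) :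
    0 ≤ lamVVV P x :=
  Finset.sum_nonneg fun _ hp => mul_nonneg (mul_nonneg (hx _ (mem_palColours hp).1)
    (hx _ (mem_palColours hp).2.1)) (hx _ (mem_palColours hp).2.2)

theorem lamVVV_le_cube {P : Palette} {x : ℕ → ℝ} (hx : ∀ a ∈ palColours P, 0 ≤ x a) :
    lamVVV P x ≤ (∑ a ∈ palColours P, x a) ^ 3 := by
  have hsub : P ⊆ palColours P ×ˢ palColours P ×ˢ palColours P := fun _ hp => by
    simpa [Finset.mem_product] using mem_palColours hp
  calc lamVVV P x ≤ ∑ p ∈ palColours P ×ˢ palColours P ×ˢ palColours P,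
        x p.1 * x p.2.1 * x p.2.2 := by
        refine Finset.sum_le_sum_of_subset_of_nonneg hsub fun p hp _ => ?_
        simp only [Finset.mem_product] at hp
        exact mul_nonneg (mul_nonneg (hx _ hp.1) (hx _ hp.2.1)) (hx _ hp.2.2)
    _ = _ := by
        simp_rw [Finset.sum_product, mul_assoc, ← Finset.mul_sum, ← Finset.sum_mul]
        ring

theorem IsWeighting.lamVVV_le_one {P : Palette} {x : ℕ → ℝ} (hx : IsWeighting P x) :
    lamVVV P x ≤ 1 := by
  simpa [hx.2] using lamVVV_le_cube hx.1

theorem IsWeighting.lamVVV_le {P : Palette} {x : ℕ → ℝ} (hx : IsWeighting P x) :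
    lamVVV P x ≤ LambdaVVV P :=
  le_csSup ⟨1, by rintro _ ⟨y, hy, rfl⟩; exact hy.lamVVV_le_one⟩ ⟨x, hx, rfl⟩

/-- By homogeneity the Lagrangian also bounds `λ` at vectors which do not sum to `1`. -/
theorem lamVVV_le_scaled {P : Palette} {x : ℕ → ℝ} (hx : ∀ a ∈ palColours P, 0 ≤ x a)
    (hs : 0 < ∑ a ∈ palColours P, x a) :
    lamVVV P x ≤ (∑ a ∈ palColours P, x a) ^ 3 * LambdaVVV P := by
  set s := ∑ a ∈ palColours P, x a with hsdef
  have hw : IsWeighting P (fun a => x a / s) :=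
    ⟨fun a ha => div_nonneg (hx a ha) hs.le, by
      rw [← Finset.sum_div, ← hsdef, div_self hs.ne']⟩
  have h1 := hw.lamVVV_le
  have h2 : lamVVV P x = s ^ 3 * lamVVV P (fun a => x a / s) := by
    unfold lamVVV
    rw [Finset.mul_sum]
    refine Finset.sum_congr rfl fun p _ => ?_
    field_simp
  rw [h2]
  exact mul_le_mul_of_nonneg_left h1 (by positivity)

/-! ### Colourability by a palette bounds the density from above -/

theorem Satisfies.of_isSubhypergraph {F H : ThreeGraph} {P : Palette} (h : IsSubhypergraph F H)
    (hH : Satisfies H P) : Satisfies F P := by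
  obtain ⟨f, hinj, hv, he⟩ := h
  obtain ⟨ord, φ, hord, hφ, hE⟩ := hH
  refine ⟨fun v => ord (f v), fun S => φ (S.image f), ?_, ?_, ?_⟩
  · intro u hu v hv' huv
    exact hinj hu hv' (hord (hv u hu) (hv v hv') huv)
  · intro u hu v hv' huv
    simp only [Finset.image_insert, Finset.image_singleton]
    exact hφ _ (hv u hu) _ (hv v hv') fun h => huv (hinj hu hv' h)
  · intro u v w he' h1 h2
    simp only [Finset.image_insert, Finset.image_singleton]
    have := he _ he'
    simp only [Finset.image_insert, Finset.image_singleton] at this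
    exact hE _ _ _ this h1 h2

theorem IsSubhypergraph.refl (H : ThreeGraph) : IsSubhypergraph H H :=
  ⟨id, Set.injOn_id _, fun _ h => h, fun e he => by simpa using he⟩

/-- The vertex set can be cut, along the ordering, into consecutive blocks of equal size. -/
theorem exists_ordered_blocks {W : Finset ℕ} {ord : ℕ → ℕ} (hord : Set.InjOn ord ↑W) {M q : ℕ}
    (h : M * q ≤ W.card) :
    ∃ V : ℕ → Finset ℕ, (∀ i < M, V i ⊆ W ∧ (V i).card = q) ∧
      ∀ i j, i < j → j < M → ∀ u ∈ V i, ∀ v ∈ V j, ord u < ord v := by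
  set S := W.image ord with hS
  have hScard : S.card = W.card := Finset.card_image_of_injOn hord
  have hfin : (Set.ofPred (· ∈ S)).Finite := S.finite_toSet
  have hfc : hfin.toFinset.card = W.card := by
    rw [← hScard]; congr 1; ext; simp
  set f : ℕ → ℕ := fun t => Function.invFunOn ord ↑W (Nat.nth (· ∈ S) t) with hf
  have hex : ∀ t < W.card, ∃ a ∈ (W : Set ℕ), ord a = Nat.nth (· ∈ S) t := fun t ht => by
    have := Nat.nth_mem_of_lt_card hfin (hfc ▸ ht)
    simpa [hS] using this
  have hfW : ∀ t < W.card, f t ∈ W := fun t ht => Function.invFunOn_mem (hex t ht)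
  have hford : ∀ t < W.card, ord (f t) = Nat.nth (· ∈ S) t := fun t ht =>
    Function.invFunOn_eq (hex t ht)
  have hmono : ∀ s t, s < t → t < W.card → ord (f s) < ord (f t) := fun s t hst ht => by
    rw [hford s (hst.trans ht), hford t ht]
    exact Nat.nth_lt_nth_of_lt_card hfin hst (hfc ▸ ht)
  have hlt : ∀ i < M, ∀ t, t ∈ Finset.Ico (i * q) ((i + 1) * q) → t < W.card := by
    intro i hi t ht
    have : (i + 1) * q ≤ M * q := Nat.mul_le_mul_right q hi
    have := (Finset.mem_Ico.mp ht).2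
    omega
  refine ⟨fun i => (Finset.Ico (i * q) ((i + 1) * q)).image f, fun i hi => ⟨?_, ?_⟩, ?_⟩
  · intro v hv
    obtain ⟨t, ht, rfl⟩ := Finset.mem_image.mp hv
    exact hfW t (hlt i hi t ht)
  · rw [Finset.card_image_of_injOn]
    · simp [Nat.add_mul]
    · intro s hs t ht hst
      rcases lt_trichotomy s t with h' | h' | h'
      · have := hmono s t h' (hlt i hi t ht)
        rw [hst] at this
        exact absurd this (lt_irrefl _)
      · exact h'
      · have := hmono t s h' (hlt i hi s hs)
        rw [hst] at this
        exact absurd this (lt_irrefl _)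
  · intro i j hij hj u hu v hv
    obtain ⟨s, hs, rfl⟩ := Finset.mem_image.mp hu
    obtain ⟨t, ht, rfl⟩ := Finset.mem_image.mp hv
    refine hmono s t ?_ (hlt j hj t ht)
    have h1 := (Finset.mem_Ico.mp hs).2
    have h2 := (Finset.mem_Ico.mp ht).1
    have : (i + 1) * q ≤ j * q := Nat.mul_le_mul_right q hij
    omega

theorem eVVV_eq_sum (H : ThreeGraph) (X Y Z : Finset ℕ) :
    (eVVV H X Y Z : ℝ) = ∑ u ∈ X, ∑ v ∈ Y, ∑ w ∈ Z,
      if ({u, v, w} : Finset ℕ) ∈ H.edges then (1 : ℝ) else 0 := by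
  unfold eVVV
  rw [Finset.card_filter]
  push_cast
  rw [Finset.sum_product]
  simp_rw [Finset.sum_product]

theorem eVVV_le_sum {H : ThreeGraph} {P : Palette} {k : ℕ → ℕ → ℕ} {X Y Z : Finset ℕ}
    (h : ∀ u ∈ X, ∀ v ∈ Y, ∀ w ∈ Z, ({u, v, w} : Finset ℕ) ∈ H.edges →
      (k u v, k v w, k u w) ∈ P) :
    (eVVV H X Y Z : ℝ) ≤ ∑ p ∈ P, ∑ u ∈ X, ∑ v ∈ Y, ∑ w ∈ Z,
      colInd k p.1 u v * colInd k p.2.1 v w * colInd k p.2.2 u w := by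
  have e2 : ∑ p ∈ P, ∑ u ∈ X, ∑ v ∈ Y, ∑ w ∈ Z,
        colInd k p.1 u v * colInd k p.2.1 v w * colInd k p.2.2 u w =
      ∑ u ∈ X, ∑ v ∈ Y, ∑ w ∈ Z, ∑ p ∈ P,
        colInd k p.1 u v * colInd k p.2.1 v w * colInd k p.2.2 u w := by
    rw [Finset.sum_comm]
    refine Finset.sum_congr rfl fun u _ => ?_
    rw [Finset.sum_comm]
    refine Finset.sum_congr rfl fun v _ => ?_
    rw [Finset.sum_comm]
  rw [eVVV_eq_sum, e2]
  refine Finset.sum_le_sum fun u hu => Finset.sum_le_sum fun v hv =>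
    Finset.sum_le_sum fun w hw => ?_
  have hnn : ∀ p ∈ P, 0 ≤ colInd k p.1 u v * colInd k p.2.1 v w * colInd k p.2.2 u w :=
    fun p _ => mul_nonneg (mul_nonneg (colInd_nonneg _ _ _ _) (colInd_nonneg _ _ _ _))
      (colInd_nonneg _ _ _ _)
  split_ifs with he
  · refine le_trans ?_ (Finset.single_le_sum
      (f := fun p : ℕ × ℕ × ℕ => colInd k p.1 u v * colInd k p.2.1 v w * colInd k p.2.2 u w)
      hnn (h u hu v hv w hw he))
    simp [colInd]
  · exact Finset.sum_nonneg hnn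

theorem sum_wt_colInd {k : ℕ → ℕ → ℕ} {C X Y : Finset ℕ}
    (h : ∀ u ∈ X, ∀ v ∈ Y, k u v ∈ C) :
    ∑ a ∈ C, wt (colInd k a) X Y = X.card * Y.card := by
  unfold wt
  rw [Finset.sum_comm]
  have : ∀ u ∈ X, ∑ a ∈ C, ∑ v ∈ Y, colInd k a u v = Y.card := fun u hu => by
    rw [Finset.sum_comm]
    have : ∀ v ∈ Y, ∑ a ∈ C, colInd k a u v = 1 := fun v hv => by
      simp [colInd, h u hu v hv]
    rw [Finset.sum_congr rfl this]
    simp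
  rw [Finset.sum_congr rfl this]
  simp

/-- In a large graph satisfying `P`, regularise all colours between many consecutive blocks, round
the densities to multiples of `ε`, and use the Ramsey theorem to find three blocks with the same
rounded densities `x`. The number of edges in that triple is then at most about `λ(x) |X||Y||Z|`. -/
theorem density_le_approx {P : Palette} (hP : P.Nonempty) {d : ℝ}
    (hd : ∀ η : ℝ, 0 < η → ∀ n : ℕ, ∃ H : ThreeGraph, n ≤ H.verts.card ∧ Satisfies H P ∧
      IsDenseVVV H d η) {ε : ℝ} (hε : 0 < ε) (hε1 : ε ≤ 1) :
    d ≤ (1 + 2 * (palColours P).card * ε) ^ 3 * LambdaVVV P + (13 * P.card + 1) * ε := by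
  classical
  set Φ := palColours P with hΦ
  obtain ⟨M₀, hM₀⟩ := exists_mono_triangle (κ := Φ → ℕ)
    (Fintype.piFinset (fun _ : Φ => Finset.range (⌊2 / ε⌋₊ + 1))).card
  obtain ⟨M, hM0, hM1⟩ : ∃ M, M₀ ≤ M ∧ 1 ≤ M := ⟨M₀ + 1, by omega, by omega⟩
  set T : Finset (ℕ × ℕ × ℕ) :=
    (Finset.range M ×ˢ Finset.range M ×ˢ Φ).filter (fun t => t.1 < t.2.1) with hT
  have hmemT : ∀ i j a, i < j → j < M → a ∈ Φ → (i, j, a) ∈ T := fun i j a hij hj ha => by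
    simp only [hT, Finset.mem_filter, Finset.mem_product, Finset.mem_range]
    exact ⟨⟨hij.trans hj, hj, ha⟩, hij⟩
  obtain ⟨δ, hδ, hδ1, hreg⟩ := exists_cutReg_all T
    (fun t ht => (Finset.mem_filter.mp ht).2.ne) ε hε hε1
  have hMpos : (0 : ℝ) < M := by exact_mod_cast hM1
  obtain ⟨H, hn, ⟨ord, φ, hord, hφ, hE⟩, hdense⟩ :=
    hd (ε * (δ / (2 * M)) ^ 3) (by positivity) M
  set N := H.verts.card with hN
  have hq1 : 1 ≤ N / M := (Nat.one_le_div_iff (by omega)).mpr hn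
  have hqN : (N : ℝ) / (2 * M) ≤ (N / M : ℕ) := by
    rw [div_le_iff₀ (by positivity)]
    have h1 := Nat.div_add_mod N M
    have h2 := Nat.mod_lt N (by omega : M > 0)
    have h3 : M * 1 ≤ M * (N / M) := Nat.mul_le_mul_left M hq1
    have h4 : N ≤ (N / M) * (2 * M) := by nlinarith
    exact_mod_cast h4
  obtain ⟨V₀, hV₀, hV₀ord⟩ := exists_ordered_blocks hord (Nat.mul_div_le N M)
  -- Regularisation is stated for infinite sequences of sets; the tail repeats the first block.
  obtain ⟨V, hV⟩ : ∃ V : ℕ → Finset ℕ, V = fun i => if i < M then V₀ i else V₀ 0 := ⟨_, rfl⟩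
  have hVlt : ∀ i < M, V i = V₀ i := fun i hi => by rw [hV]; simp [hi]
  have hVcard : ∀ i, (V i).card = N / M := fun i => by
    rw [hV]
    by_cases hi : i < M
    · simpa [hi] using (hV₀ i hi).2
    · simpa [hi] using (hV₀ 0 hM1).2
  obtain ⟨k, hk⟩ : ∃ k : ℕ → ℕ → ℕ, k = fun u v => φ {u, v} := ⟨_, rfl⟩
  obtain ⟨W, hWV, hWc, hWreg⟩ := hreg (colInd k) (colInd_nonneg k) (colInd_le_one k) V
    (fun i => Finset.card_pos.mp (by rw [hVcard]; omega))
  choose! dd hdd0 hdd using hWreg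
  have hWbig : ∀ i, δ / (2 * M) * N ≤ (W i).card := fun i => by
    refine le_trans ?_ (hWc i)
    rw [hVcard]
    calc δ / (2 * M) * N = δ * (N / (2 * M)) := by ring
      _ ≤ _ := mul_le_mul_of_nonneg_left hqN hδ.le
  have hNpos : (0 : ℝ) < N := by exact_mod_cast (by omega : 0 < N)
  have hWpos : ∀ i, (0 : ℝ) < (W i).card := fun i => lt_of_lt_of_le (by positivity) (hWbig i)
  have hWverts : ∀ i < M, W i ⊆ H.verts := fun i hi =>
    (hWV i).trans (hVlt i hi ▸ (hV₀ i hi).1)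
  have hWord : ∀ i j, i < j → j < M → ∀ u ∈ W i, ∀ v ∈ W j, ord u < ord v := by
    intro i j hij hj u hu v hv
    exact hV₀ord i j hij hj u (hVlt i (hij.trans hj) ▸ hWV i hu) v (hVlt j hj ▸ hWV j hv)
  have hkmem : ∀ i j, i < j → j < M → ∀ u ∈ W i, ∀ v ∈ W j, k u v ∈ Φ := by
    intro i j hij hj u hu v hv
    rw [hk]
    refine hφ u (hWverts i (hij.trans hj) hu) v (hWverts j hj hv) fun h => ?_
    have := hWord i j hij hj u hu v hv
    rw [h] at this
    exact lt_irrefl _ this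
  have hddle : ∀ i j a, i < j → j < M → a ∈ Φ →
      dd (i, j, a) * (W i).card * (W j).card ≤
        wt (colInd k a) (W i) (W j) + ε * (W i).card * (W j).card := by
    intro i j a hij hj ha
    have := (abs_le.mp (hdd _ (hmemT i j a hij hj ha) (W i) subset_rfl (W j) subset_rfl)).1
    dsimp only at this
    linarith
  have hdd2 : ∀ i j a, i < j → j < M → a ∈ Φ → dd (i, j, a) ≤ 2 := by
    intro i j a hij hj ha
    have h1 := hddle i j a hij hj ha
    have h2 := wt_le (colInd_le_one k a) (W i) (W j)
    have hp := mul_pos (hWpos i) (hWpos j)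
    refine le_of_mul_le_mul_right ?_ hp
    have h3 := mul_le_mul_of_nonneg_right hε1 hp.le
    linarith
  obtain ⟨χ, hχ⟩ : ∃ χ : ℕ → ℕ → Φ → ℕ, χ = fun i j (a : Φ) => ⌊dd (i, j, (a : ℕ)) / ε⌋₊ := ⟨_, rfl⟩
  obtain ⟨i, hi, j, hj, l, hl, hij, hjl, hc1, hc2⟩ := hM₀ _ rfl (Finset.range M)
    (by simpa using hM0) χ (fun i _ j hj hij => by
      rw [Fintype.mem_piFinset]
      intro a
      rw [Finset.mem_range, hχ]
      refine Nat.lt_succ_of_le (Nat.floor_le_floor ?_)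
      exact div_le_div_of_nonneg_right
        (hdd2 i j a hij (Finset.mem_range.mp hj) a.2) hε.le)
  rw [Finset.mem_range] at hi hj hl
  obtain ⟨x, hx⟩ : ∃ x : ℕ → ℝ, x = fun a => ε * (⌊dd (i, j, a) / ε⌋₊ + 1) := ⟨_, rfl⟩
  have hxpos : ∀ a, 0 < x a := fun a => by rw [hx]; positivity
  have hup : ∀ p r, p < r → r < M → χ p r = χ i j → ∀ a ∈ Φ, ∀ A ⊆ W p, ∀ B ⊆ W r,
      wt (colInd k a) A B ≤ x a * A.card * B.card + ε * (W p).card * (W r).card := by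
    intro p r hpr hr hpχ a ha A hA B hB
    have h1 := (abs_le.mp (hdd _ (hmemT p r a hpr hr ha) A hA B hB)).2
    dsimp only at h1
    have h2 : dd (p, r, a) ≤ x a := by
      have h3 : ⌊dd (p, r, a) / ε⌋₊ = ⌊dd (i, j, a) / ε⌋₊ := by
        have := congrFun hpχ ⟨a, ha⟩
        rw [hχ] at this
        exact this
      have h4 := (Nat.lt_floor_add_one (dd (p, r, a) / ε)).le
      rw [h3, div_le_iff₀ hε] at h4
      rw [hx]
      linarith
    have h5 : dd (p, r, a) * (A.card * B.card) ≤ x a * (A.card * B.card) :=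
      mul_le_mul_of_nonneg_right h2 (by positivity)
    linarith
  have hxdd : ∀ a ∈ Φ, x a ≤ dd (i, j, a) + ε := fun a ha => by
    have h1 := Nat.floor_le (div_nonneg (hdd0 _ (hmemT i j a hij hj ha)) hε.le)
    rw [le_div_iff₀ hε] at h1
    rw [hx]
    linarith
  have hx3 : ∀ a ∈ Φ, x a ≤ 3 := fun a ha => by
    have := hxdd a ha
    have := hdd2 i j a hij hj ha
    linarith
  have hsum : ∑ a ∈ Φ, x a ≤ 1 + 2 * Φ.card * ε := by
    have h1 : (∑ a ∈ Φ, dd (i, j, a)) * ((W i).card * (W j).card) ≤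
        (1 + Φ.card * ε) * ((W i).card * (W j).card) := by
      rw [Finset.sum_mul]
      calc _ ≤ ∑ a ∈ Φ, (wt (colInd k a) (W i) (W j) + ε * (W i).card * (W j).card) :=
            Finset.sum_le_sum fun a ha => by
              rw [← mul_assoc]; exact hddle i j a hij hj ha
        _ = _ := by
            rw [Finset.sum_add_distrib, sum_wt_colInd (hkmem i j hij hj), Finset.sum_const,
              nsmul_eq_mul]
            ring
    have h2 := le_of_mul_le_mul_right h1 (mul_pos (hWpos i) (hWpos j))
    calc ∑ a ∈ Φ, x a ≤ ∑ a ∈ Φ, (dd (i, j, a) + ε) := Finset.sum_le_sum hxdd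
      _ = ∑ a ∈ Φ, dd (i, j, a) + Φ.card * ε := by
          rw [Finset.sum_add_distrib, Finset.sum_const, nsmul_eq_mul]
      _ ≤ _ := by linarith
  have hΦne : Φ.Nonempty := by
    obtain ⟨p, hp⟩ := hP
    exact ⟨p.1, (mem_palColours hp).1⟩
  have hspos : 0 < ∑ a ∈ Φ, x a := Finset.sum_pos (fun a _ => hxpos a) hΦne
  have hLam0 : 0 ≤ LambdaVVV P := by
    have h1 := lamVVV_le_scaled (P := P) (fun a _ => (hxpos a).le) hspos
    have h2 := lamVVV_nonneg (P := P) (x := x) (fun a _ => (hxpos a).le)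
    exact nonneg_of_mul_nonneg_right (h2.trans h1) (by positivity)
  have hlam : lamVVV P x ≤ (1 + 2 * Φ.card * ε) ^ 3 * LambdaVVV P :=
    (lamVVV_le_scaled (P := P) (fun a _ => (hxpos a).le) hspos).trans
      (mul_le_mul_of_nonneg_right (pow_le_pow_left₀ hspos.le hsum 3) hLam0)
  have hcount : (eVVV H (W i) (W j) (W l) : ℝ) ≤
      (lamVVV P x + 13 * P.card * ε) * ((W i).card * (W j).card * (W l).card) := by
    refine (eVVV_le_sum (k := k) (P := P) ?_).trans ?_
    · intro u hu v hv w hw he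
      rw [hk]
      exact hE u v w he (hWord i j hij hj u hu v hv) (hWord j l hjl hl v hv w hw)
    · have hterm : ∀ p ∈ P, ∑ u ∈ W i, ∑ v ∈ W j, ∑ w ∈ W l,
          colInd k p.1 u v * colInd k p.2.1 v w * colInd k p.2.2 u w ≤
          (x p.1 * x p.2.1 * x p.2.2 + 13 * ε) *
            ((W i).card * (W j).card * (W l).card) := by
        intro p hp
        obtain ⟨m1, m2, m3⟩ := mem_palColours hp
        refine (triangle_count_le (hxpos p.1).le (hxpos p.2.1).le
          (hup i j hij hj rfl _ m1) (hup j l hjl hl hc1 _ m2)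
          (hup i l (hij.trans hjl) hl hc2 _ m3 _ subset_rfl _ subset_rfl)).trans ?_
        refine mul_le_mul_of_nonneg_right ?_ (by positivity)
        have b1 : x p.1 * x p.2.1 ≤ 3 * 3 :=
          mul_le_mul (hx3 _ m1) (hx3 _ m2) (hxpos _).le (by norm_num)
        have b2 := mul_le_mul_of_nonneg_right b1 hε.le
        have b3 := mul_le_mul_of_nonneg_right (hx3 _ m1) hε.le
        linarith
      refine (Finset.sum_le_sum hterm).trans (le_of_eq ?_)
      rw [← Finset.sum_mul, Finset.sum_add_distrib, Finset.sum_const, nsmul_eq_mul]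
      unfold lamVVV
      ring
  have hlow := hdense (W i) (W j) (W l) (hWverts i hi) (hWverts j hj) (hWverts l hl)
  set Q : ℝ := (W i).card * (W j).card * (W l).card with hQ
  have hQpos : 0 < Q := mul_pos (mul_pos (hWpos i) (hWpos j)) (hWpos l)
  have hη : ε * (δ / (2 * M)) ^ 3 * (N : ℝ) ^ 3 ≤ ε * Q := by
    have h0 : 0 ≤ δ / (2 * M) * N := by positivity
    calc ε * (δ / (2 * M)) ^ 3 * (N : ℝ) ^ 3 =
          ε * ((δ / (2 * M) * N) * (δ / (2 * M) * N) * (δ / (2 * M) * N)) := by ring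
      _ ≤ _ := by
          refine mul_le_mul_of_nonneg_left ?_ hε.le
          exact mul_le_mul (mul_le_mul (hWbig i) (hWbig j) h0 (hWpos i).le) (hWbig l) h0
            (mul_pos (hWpos i) (hWpos j)).le
  have hfin : d * Q ≤ (lamVVV P x + (13 * P.card + 1) * ε) * Q := by
    have : d * (W i).card * (W j).card * (W l).card = d * Q := by rw [hQ]; ring
    linarith
  linarith [le_of_mul_le_mul_right hfin hQpos]

theorem density_le {P : Palette} (hP : P.Nonempty) {d : ℝ}
    (hd : ∀ η : ℝ, 0 < η → ∀ n : ℕ, ∃ H : ThreeGraph, n ≤ H.verts.card ∧ Satisfies H P ∧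
      IsDenseVVV H d η) : d ≤ LambdaVVV P := by
  have hcont : Continuous fun ε : ℝ =>
      (1 + 2 * (palColours P).card * ε) ^ 3 * LambdaVVV P + (13 * P.card + 1) * ε := by
    fun_prop
  have hlim := (hcont.tendsto 0).mono_left (nhdsWithin_le_nhds (s := Set.Ioi (0 : ℝ)))
  simp only [mul_zero, add_zero, one_pow, one_mul] at hlim
  refine ge_of_tendsto hlim ?_
  filter_upwards [Ioc_mem_nhdsGT (one_pos : (0 : ℝ) < 1)] with ε hε
  exact density_le_approx hP hd hε.1 hε.2

/-! ### An explicit quasirandom colouring -/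

theorem sum_range_mul_blocks (K s : ℕ) (ψ χ : ℕ → ℝ) :
    ∑ v ∈ Finset.range (K * s), ψ (v / s) * χ (v % s) =
      (∑ b ∈ Finset.range K, ψ b) * ∑ p ∈ Finset.range s, χ p := by
  induction K with
  | zero => simp
  | succ K ih =>
    rw [Nat.add_mul, one_mul, Finset.sum_range_add, ih, Finset.sum_range_succ, add_mul]
    congr 1
    rw [Finset.mul_sum]
    refine Finset.sum_congr rfl fun p hp => ?_
    have hp' := Finset.mem_range.mp hp
    have hs : 0 < s := by omega
    rw [Nat.mul_comm K s, Nat.mul_add_div hs, Nat.div_eq_of_lt hp', Nat.mul_add_mod,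
      Nat.mod_eq_of_lt hp', add_zero]

/-- Two different coordinates of a uniformly random function are independent. -/
theorem sum_fun_mul_eq_zero {ι Q : Type*} [Fintype ι] [DecidableEq ι] [Fintype Q] {h : Q → ℝ}
    (h0 : ∑ q, h q = 0) {i j : ι} (hij : i ≠ j) : ∑ f : ι → Q, h (f i) * h (f j) = 0 := by
  have e := Fintype.sum_equiv (Equiv.funSplitAt i Q) (fun f : ι → Q => h (f i) * h (f j))
    (fun x => h x.1 * h (x.2 ⟨j, hij.symm⟩)) (fun f => by simp [Equiv.funSplitAt])
  rw [e, Fintype.sum_prod_type]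
  dsimp only
  rw [← Finset.sum_mul_sum, h0, zero_mul]

/-- The indicator that `u` lies in an earlier block of length `s` than `v`. -/
noncomputable def blkLt (s u v : ℕ) : ℝ := if u / s < v / s then 1 else 0

theorem blkLt_nonneg (s u v : ℕ) : 0 ≤ blkLt s u v := by
  unfold blkLt; split_ifs <;> norm_num

theorem blkLt_le_one (s u v : ℕ) : blkLt s u v ≤ 1 := by
  unfold blkLt; split_ifs <;> norm_num

/-- A colouring of the pairs `u < v` in different blocks by `Q` which is quasirandom: every
mean-zero function of the colour has small cut norm. Each block is a copy of
`Fin m × (Fin m → Q)`, and the colour of the pair is the value of the function belonging to `v` at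
the coordinate belonging to `u`; two rows with different coordinates are orthogonal on every block,
so the cut norm is small by the Cauchy–Schwarz inequality. -/
theorem exists_quasirandom (Q : Type*) [Fintype Q] [Nonempty Q] (K m : ℕ) (hm : 1 ≤ m) :
    ∃ (s : ℕ) (c : ℕ → ℕ → Q), m ≤ s ∧ ∀ h : Q → ℝ, ∑ q, h q = 0 → (∀ q, |h q| ≤ 1) →
      ∀ α β : ℕ → ℝ, (∀ u, |α u| ≤ 1) → (∀ v, |β v| ≤ 1) →
        (∑ u ∈ Finset.range (K * s), ∑ v ∈ Finset.range (K * s),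
          α u * β v * (h (c u v) * blkLt s u v)) ^ 2 * m ≤ ((K * s : ℕ) : ℝ) ^ 4 := by
  classical
  obtain ⟨R, hR⟩ : ∃ R : ℕ, R = Fintype.card (Fin m → Q) := ⟨_, rfl⟩
  have hR1 : 1 ≤ R := by rw [hR]; exact Fintype.card_pos
  have hcard : Fintype.card (Fin m × (Fin m → Q)) = m * R := by
    rw [Fintype.card_prod, Fintype.card_fin, hR]
  obtain ⟨s, hs⟩ : ∃ s, s = m * R := ⟨_, rfl⟩
  have hspos : 0 < s := by rw [hs]; positivity
  have hms : m ≤ s := by rw [hs]; exact Nat.le_mul_of_pos_right m hR1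
  let e : Fin s ≃ Fin m × (Fin m → Q) :=
    (finCongr (hs.trans hcard.symm)).trans (Fintype.equivFin _).symm
  let l : ℕ → Fin m := fun p => (e ⟨p % s, Nat.mod_lt _ hspos⟩).1
  let r : ℕ → Fin m → Q := fun p => (e ⟨p % s, Nat.mod_lt _ hspos⟩).2
  have hlmod : ∀ p, l (p % s) = l p := fun p => by simp [l]
  have hrmod : ∀ p, r (p % s) = r p := fun p => by simp [r]
  have hsum : ∀ χ : Fin m → (Fin m → Q) → ℝ,
      ∑ p ∈ Finset.range s, χ (l p) (r p) = ∑ a, ∑ f, χ a f := by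
    intro χ
    rw [← Fintype.sum_prod_type', ← Equiv.sum_comp e, Finset.sum_range]
    refine Finset.sum_congr rfl fun p _ => ?_
    have : (⟨(p : ℕ) % s, Nat.mod_lt _ hspos⟩ : Fin s) = p :=
      Fin.ext (Nat.mod_eq_of_lt p.2)
    simp only [l, r, this]
  refine ⟨s, fun u v => r v (l u), hms, ?_⟩
  intro h h0 h1 α β hα hβ
  set I := Finset.range (K * s) with hI
  set N : ℝ := ((K * s : ℕ) : ℝ) with hN
  have hN0 : 0 ≤ N := Nat.cast_nonneg _
  have hIcard : (I.card : ℝ) = N := by rw [hI, Finset.card_range]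
  obtain ⟨A, hA⟩ : ∃ A : ℕ → ℕ → ℝ, A = fun u v => h (r v (l u)) * blkLt s u v := ⟨_, rfl⟩
  have hA1 : ∀ u v, |A u v| ≤ 1 := fun u v => by
    rw [hA]
    simp only [abs_mul]
    exact mul_le_one₀ (h1 _) (abs_nonneg _)
      (abs_le.mpr ⟨by linarith [blkLt_nonneg s u v], blkLt_le_one s u v⟩)
  -- rows belonging to different coordinates are orthogonal
  have horth : ∀ u u', l u ≠ l u' → ∑ v ∈ I, A u v * A u' v = 0 := by
    intro u u' hne
    have e1 := sum_range_mul_blocks K s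
      (fun b => (if u / s < b then (1 : ℝ) else 0) * (if u' / s < b then (1 : ℝ) else 0))
      (fun p => h (r p (l u)) * h (r p (l u')))
    have e2 := hsum fun _ f => h (f (l u)) * h (f (l u'))
    simp only [sum_fun_mul_eq_zero h0 hne, Finset.sum_const_zero] at e2
    rw [e2, mul_zero] at e1
    rw [← e1]
    refine Finset.sum_congr rfl fun v _ => ?_
    simp only [hA, blkLt, hrmod]
    ring
  have hrow : ∀ u u', |∑ v ∈ I, A u v * A u' v| ≤ if l u = l u' then N else 0 := by
    intro u u'
    split_ifs with hl
    · refine (Finset.abs_sum_le_sum_abs _ _).trans ?_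
      calc _ ≤ ∑ v ∈ I, (1 : ℝ) := Finset.sum_le_sum fun v _ => by
            rw [abs_mul]; exact mul_le_one₀ (hA1 _ _) (abs_nonneg _) (hA1 _ _)
        _ = N := by rw [Finset.sum_const, nsmul_eq_mul, mul_one, hIcard]
    · rw [horth u u' hl, abs_zero]
  have hcount : ∀ u, (∑ u' ∈ I, if l u = l u' then N else 0) * m = N * N := by
    intro u
    have e1 := sum_range_mul_blocks K s (fun _ => 1) (fun p => if l u = l p then N else 0)
    have e2 := hsum fun a _ => if l u = a then N else 0
    rw [e2] at e1
    simp only [hlmod, one_mul, Finset.sum_const, Finset.card_range, nsmul_eq_mul, mul_one,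
      Finset.card_univ, ← hR] at e1
    rw [← Finset.mul_sum, Finset.sum_ite_eq, if_pos (Finset.mem_univ _)] at e1
    rw [hI, e1]
    have : N = K * (m * R) := by rw [hN, hs]; push_cast; ring
    calc (K : ℝ) * (R * N) * m = (K * (m * R)) * N := by ring
      _ = _ := by rw [← this]
  have hS : ∑ v ∈ I, (∑ u ∈ I, α u * A u v) ^ 2 ≤
      ∑ u ∈ I, ∑ u' ∈ I, if l u = l u' then N else 0 := by
    have e1 : ∑ v ∈ I, (∑ u ∈ I, α u * A u v) ^ 2 =
        ∑ u ∈ I, ∑ u' ∈ I, α u * α u' * ∑ v ∈ I, A u v * A u' v := by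
      simp_rw [sq, Finset.sum_mul_sum]
      rw [Finset.sum_comm]
      refine Finset.sum_congr rfl fun u _ => ?_
      rw [Finset.sum_comm]
      refine Finset.sum_congr rfl fun u' _ => ?_
      rw [Finset.mul_sum]
      exact Finset.sum_congr rfl fun v _ => by ring
    rw [e1]
    refine Finset.sum_le_sum fun u _ => Finset.sum_le_sum fun u' _ => ?_
    refine (le_abs_self _).trans ?_
    rw [abs_mul, abs_mul]
    exact (mul_le_of_le_one_left (abs_nonneg _)
      (mul_le_one₀ (hα u) (abs_nonneg _) (hα u'))).trans (hrow u u')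
  have hβ2 : ∑ v ∈ I, β v ^ 2 ≤ N := by
    calc _ ≤ ∑ v ∈ I, (1 : ℝ) := Finset.sum_le_sum fun v _ => by
          rw [← sq_abs]; exact pow_le_one₀ (abs_nonneg _) (hβ v)
      _ = N := by rw [Finset.sum_const, nsmul_eq_mul, mul_one, hIcard]
  have hswap : ∑ u ∈ I, ∑ v ∈ I, α u * β v * (h (r v (l u)) * blkLt s u v) =
      ∑ v ∈ I, β v * ∑ u ∈ I, α u * A u v := by
    rw [Finset.sum_comm]
    refine Finset.sum_congr rfl fun v _ => ?_
    rw [Finset.mul_sum]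
    refine Finset.sum_congr rfl fun u _ => ?_
    rw [hA]; ring
  rw [hswap]
  have hCS := Finset.sum_mul_sq_le_sq_mul_sq I β (fun v => ∑ u ∈ I, α u * A u v)
  have hS0 : 0 ≤ ∑ v ∈ I, (∑ u ∈ I, α u * A u v) ^ 2 := Finset.sum_nonneg fun _ _ => sq_nonneg _
  calc _ ≤ (∑ v ∈ I, β v ^ 2) * (∑ v ∈ I, (∑ u ∈ I, α u * A u v) ^ 2) * m :=
        mul_le_mul_of_nonneg_right hCS (Nat.cast_nonneg _)
    _ ≤ N * (∑ u ∈ I, ∑ u' ∈ I, if l u = l u' then N else 0) * m := by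
        refine mul_le_mul_of_nonneg_right ?_ (Nat.cast_nonneg _)
        exact mul_le_mul hβ2 hS hS0 hN0
    _ = N * ∑ u ∈ I, ((∑ u' ∈ I, if l u = l u' then N else 0) * m) := by
        rw [mul_assoc, Finset.sum_mul]
    _ = N ^ 4 := by
        rw [Finset.sum_congr rfl fun u _ => hcount u, Finset.sum_const, nsmul_eq_mul, hIcard]
        ring

/-! ### Counting in quasirandom colourings -/

/-- If each `p i` is within small cut norm of a multiple `f i` of `o`, then the weighted number of
triangles is as expected: the three factors are replaced one at a time, fixing the vertex outside
the pair being replaced. -/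
theorem triangle_count_ge {I : Finset ℕ} {o p₁ p₂ p₃ : ℕ → ℕ → ℝ} {f₁ f₂ f₃ D : ℝ}
    (ho : ∀ u v, |o u v| ≤ 1) (hp₂ : ∀ u v, |p₂ u v| ≤ 1) (hp₃ : ∀ u v, |p₃ u v| ≤ 1)
    (hf₁ : |f₁| ≤ 1) (hf₂ : |f₂| ≤ 1)
    (h₁ : ∀ α β : ℕ → ℝ, (∀ u, |α u| ≤ 1) → (∀ v, |β v| ≤ 1) →
      |∑ u ∈ I, ∑ v ∈ I, α u * β v * (p₁ u v - f₁ * o u v)| ≤ D)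
    (h₂ : ∀ α β : ℕ → ℝ, (∀ u, |α u| ≤ 1) → (∀ v, |β v| ≤ 1) →
      |∑ u ∈ I, ∑ v ∈ I, α u * β v * (p₂ u v - f₂ * o u v)| ≤ D)
    (h₃ : ∀ α β : ℕ → ℝ, (∀ u, |α u| ≤ 1) → (∀ v, |β v| ≤ 1) →
      |∑ u ∈ I, ∑ v ∈ I, α u * β v * (p₃ u v - f₃ * o u v)| ≤ D)
    {α β γ : ℕ → ℝ} (hα : ∀ u, |α u| ≤ 1) (hβ : ∀ u, |β u| ≤ 1) (hγ : ∀ u, |γ u| ≤ 1) :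
    -(3 * (I.card * D)) ≤ ∑ u ∈ I, ∑ v ∈ I, ∑ w ∈ I, α u * β v * γ w *
      (p₁ u v * p₂ v w * p₃ u w - f₁ * f₂ * f₃ * (o u v * o v w * o u w)) := by
  have hm : ∀ {a b : ℝ}, |a| ≤ 1 → |b| ≤ 1 → |a * b| ≤ 1 := fun ha hb => by
    rw [abs_mul]; exact mul_le_one₀ ha (abs_nonneg _) hb
  have bound : ∀ (c G : ℕ → ℝ), (∀ x, |c x| ≤ 1) → (∀ x, |G x| ≤ D) →
      -(I.card * D) ≤ ∑ x ∈ I, c x * G x := by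
    intro c G hc hG
    rw [← mul_neg, ← nsmul_eq_mul, ← Finset.sum_const]
    refine Finset.sum_le_sum fun x _ => ?_
    refine le_trans (neg_le_neg ?_) (neg_abs_le _)
    rw [abs_mul]
    exact (mul_le_of_le_one_left (abs_nonneg _) (hc x)).trans (hG x)
  have t1 := bound γ (fun w => ∑ u ∈ I, ∑ v ∈ I,
      (α u * p₃ u w) * (β v * p₂ v w) * (p₁ u v - f₁ * o u v)) hγ
    (fun w => h₁ _ _ (fun u => hm (hα u) (hp₃ u w)) (fun v => hm (hβ v) (hp₂ v w)))
  have t2 := bound (fun u => α u * f₁) (fun u => ∑ v ∈ I, ∑ w ∈ I,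
      (β v * o u v) * (γ w * p₃ u w) * (p₂ v w - f₂ * o v w)) (fun u => hm (hα u) hf₁)
    (fun u => h₂ _ _ (fun v => hm (hβ v) (ho u v)) (fun w => hm (hγ w) (hp₃ u w)))
  have t3 := bound (fun v => β v * (f₁ * f₂)) (fun v => ∑ u ∈ I, ∑ w ∈ I,
      (α u * o u v) * (γ w * o v w) * (p₃ u w - f₃ * o u w)) (fun v => hm (hβ v) (hm hf₁ hf₂))
    (fun v => h₃ _ _ (fun u => hm (hα u) (ho u v)) (fun w => hm (hγ w) (ho v w)))
  simp only [Finset.mul_sum] at t1 t2 t3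
  rw [Finset.sum_comm] at t1 t3
  rw [Finset.sum_congr rfl fun u _ => Finset.sum_comm] at t1
  have key : ∑ u ∈ I, ∑ v ∈ I, ∑ w ∈ I, α u * β v * γ w *
      (p₁ u v * p₂ v w * p₃ u w - f₁ * f₂ * f₃ * (o u v * o v w * o u w)) =
      (∑ u ∈ I, ∑ v ∈ I, ∑ w ∈ I,
        γ w * (α u * p₃ u w * (β v * p₂ v w) * (p₁ u v - f₁ * o u v))) +
      (∑ u ∈ I, ∑ v ∈ I, ∑ w ∈ I,
        α u * f₁ * (β v * o u v * (γ w * p₃ u w) * (p₂ v w - f₂ * o v w))) +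
      (∑ u ∈ I, ∑ v ∈ I, ∑ w ∈ I,
        β v * (f₁ * f₂) * (α u * o u v * (γ w * o v w) * (p₃ u w - f₃ * o u w))) := by
    simp only [← Finset.sum_add_distrib]
    refine Finset.sum_congr rfl fun u _ => Finset.sum_congr rfl fun v _ =>
      Finset.sum_congr rfl fun w _ => ?_
    ring
  rw [key]
  linarith

/-- Summation of a one-order estimate over the six orders of three vertices. -/
theorem sum_six_orders {I : Finset ℕ} {G : ℕ → ℕ → ℕ → ℝ} {E : ℝ}
    (h : ∀ α β γ : ℕ → ℝ, (∀ u, |α u| ≤ 1) → (∀ u, |β u| ≤ 1) → (∀ u, |γ u| ≤ 1) →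
      -E ≤ ∑ u ∈ I, ∑ v ∈ I, ∑ w ∈ I, α u * β v * γ w * G u v w)
    {α β γ : ℕ → ℝ} (hα : ∀ u, |α u| ≤ 1) (hβ : ∀ u, |β u| ≤ 1) (hγ : ∀ u, |γ u| ≤ 1) :
    -(6 * E) ≤ ∑ x ∈ I, ∑ y ∈ I, ∑ z ∈ I, α x * β y * γ z *
      (G x y z + G x z y + G y x z + G y z x + G z x y + G z y x) := by
  have c12 : ∀ F : ℕ → ℕ → ℕ → ℝ, ∑ u ∈ I, ∑ v ∈ I, ∑ w ∈ I, F u v w =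
      ∑ v ∈ I, ∑ u ∈ I, ∑ w ∈ I, F u v w := fun F => Finset.sum_comm
  have c23 : ∀ F : ℕ → ℕ → ℕ → ℝ, ∑ u ∈ I, ∑ v ∈ I, ∑ w ∈ I, F u v w =
      ∑ u ∈ I, ∑ w ∈ I, ∑ v ∈ I, F u v w :=
    fun F => Finset.sum_congr rfl fun u _ => Finset.sum_comm
  have t1 := h α β γ hα hβ hγ
  have t2 := h α γ β hα hγ hβ
  rw [c23] at t2
  have t3 := h β α γ hβ hα hγ
  rw [c12] at t3
  have t4 := h β γ α hβ hγ hα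
  rw [c23, c12] at t4
  have t5 := h γ α β hγ hα hβ
  rw [c12, c23] at t5
  have t6 := h γ β α hγ hβ hα
  rw [c12, c23, c12] at t6
  have key : ∑ x ∈ I, ∑ y ∈ I, ∑ z ∈ I, α x * β y * γ z *
      (G x y z + G x z y + G y x z + G y z x + G z x y + G z y x) =
      (∑ x ∈ I, ∑ y ∈ I, ∑ z ∈ I, α x * β y * γ z * G x y z) +
      (∑ x ∈ I, ∑ y ∈ I, ∑ z ∈ I, α x * γ z * β y * G x z y) +
      (∑ x ∈ I, ∑ y ∈ I, ∑ z ∈ I, β y * α x * γ z * G y x z) +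
      (∑ x ∈ I, ∑ y ∈ I, ∑ z ∈ I, β y * γ z * α x * G y z x) +
      (∑ x ∈ I, ∑ y ∈ I, ∑ z ∈ I, γ z * α x * β y * G z x y) +
      (∑ x ∈ I, ∑ y ∈ I, ∑ z ∈ I, γ z * β y * α x * G z y x) := by
    simp only [← Finset.sum_add_distrib]
    refine Finset.sum_congr rfl fun u _ => Finset.sum_congr rfl fun v _ =>
      Finset.sum_congr rfl fun w _ => ?_
    ring
  rw [key]
  linarith

/-! ### The 3-graph of a coloured blow-up -/

/-- The 3-graph on `range N` whose edges are the triples `u, v, w` in increasing blocks of length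
`s` for which the colours `col u v`, `col v w`, `col u w` form a triple of `P`. -/
def blkGraph (P : Palette) (s N : ℕ) (col : ℕ → ℕ → ℕ) : ThreeGraph where
  verts := Finset.range N
  edges := ((Finset.range N ×ˢ Finset.range N ×ˢ Finset.range N).filter fun t =>
    t.1 / s < t.2.1 / s ∧ t.2.1 / s < t.2.2 / s ∧
      (col t.1 t.2.1, col t.2.1 t.2.2, col t.1 t.2.2) ∈ P).image fun t => {t.1, t.2.1, t.2.2}
  edge_sub := by
    intro e he
    obtain ⟨t, ht, rfl⟩ := Finset.mem_image.mp he
    simp only [Finset.mem_filter, Finset.mem_product] at ht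
    intro x hx
    simp only [Finset.mem_insert, Finset.mem_singleton] at hx
    rcases hx with rfl | rfl | rfl
    · exact ht.1.1
    · exact ht.1.2.1
    · exact ht.1.2.2
  edge_card := by
    intro e he
    obtain ⟨t, ht, rfl⟩ := Finset.mem_image.mp he
    simp only [Finset.mem_filter] at ht
    obtain ⟨-, h1, h2, -⟩ := ht
    refine Finset.card_eq_three.mpr ⟨_, _, _, ?_, ?_, ?_, rfl⟩
    · exact fun h => by rw [h] at h1; exact lt_irrefl _ h1
    · exact fun h => by rw [h] at h1; exact lt_asymm h1 h2
    · exact fun h => by rw [h] at h2; exact lt_irrefl _ h2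

theorem blkGraph_satisfies {P : Palette} (s N : ℕ) {col : ℕ → ℕ → ℕ}
    (hcol : ∀ u v, col u v ∈ palColours P) : Satisfies (blkGraph P s N col) P := by
  refine ⟨id, fun S => col (sInf (S : Set ℕ)) (sSup (S : Set ℕ)), Function.injective_id.injOn,
    fun _ _ _ _ _ => hcol _ _, ?_⟩
  have hφ : ∀ u v : ℕ, u < v → col (sInf (({u, v} : Finset ℕ) : Set ℕ))
      (sSup (({u, v} : Finset ℕ) : Set ℕ)) = col u v := by
    intro u v h
    rw [Finset.coe_pair, csInf_pair, csSup_pair, inf_eq_left.mpr h.le, sup_eq_right.mpr h.le]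
  intro u v w he huv hvw
  simp only [id] at huv hvw
  obtain ⟨⟨a, b, c⟩, ht, hE⟩ := Finset.mem_image.mp he
  simp only [Finset.mem_filter] at ht hE
  obtain ⟨-, h1, h2, hP⟩ := ht
  have hab : a < b := lt_of_not_ge fun h => absurd h1 (not_lt.mpr (Nat.div_le_div_right h))
  have hbc : b < c := lt_of_not_ge fun h => absurd h2 (not_lt.mpr (Nat.div_le_div_right h))
  have hu : u ∈ ({a, b, c} : Finset ℕ) := by rw [hE]; simp
  have hv : v ∈ ({a, b, c} : Finset ℕ) := by rw [hE]; simp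
  have hw : w ∈ ({a, b, c} : Finset ℕ) := by rw [hE]; simp
  simp only [Finset.mem_insert, Finset.mem_singleton] at hu hv hw
  obtain ⟨rfl, rfl, rfl⟩ : u = a ∧ v = b ∧ w = c := by omega
  dsimp only
  rw [hφ u v hab, hφ v w hbc, hφ u w (hab.trans hbc)]
  exact hP

theorem sum_palette_le_edge {P : Palette} {s N u v w : ℕ} {col : ℕ → ℕ → ℕ}
    (hu : u ∈ Finset.range N) (hv : v ∈ Finset.range N) (hw : w ∈ Finset.range N) :
    ∑ p ∈ P, (colInd col p.1 u v * blkLt s u v) * (colInd col p.2.1 v w * blkLt s v w) *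
      (colInd col p.2.2 u w * blkLt s u w) ≤
    (if ({u, v, w} : Finset ℕ) ∈ (blkGraph P s N col).edges then (1 : ℝ) else 0) *
      (blkLt s u v * blkLt s v w * blkLt s u w) := by
  have e : ∀ p ∈ P, (colInd col p.1 u v * blkLt s u v) * (colInd col p.2.1 v w * blkLt s v w) *
      (colInd col p.2.2 u w * blkLt s u w) =
      if p = (col u v, col v w, col u w) then blkLt s u v * blkLt s v w * blkLt s u w else 0 := by
    rintro ⟨a, b, c⟩ -
    unfold colInd
    by_cases h : (a, b, c) = (col u v, col v w, col u w)
    · rw [if_pos h]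
      obtain ⟨rfl, rfl, rfl⟩ : a = col u v ∧ b = col v w ∧ c = col u w := by simpa using h
      simp
    · rw [if_neg h]
      by_cases h1 : col u v = a
      · by_cases h2 : col v w = b
        · have h3 : col u w ≠ c := fun h3 => h (by rw [h1, h2, h3])
          simp [h3]
        · simp [h2]
      · simp [h1]
  rw [Finset.sum_congr rfl e, Finset.sum_ite_eq']
  by_cases hP : (col u v, col v w, col u w) ∈ P
  · rw [if_pos hP]
    by_cases hb : u / s < v / s ∧ v / s < w / s
    · rw [if_pos, one_mul]
      exact Finset.mem_image.mpr ⟨(u, v, w), Finset.mem_filter.mpr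
        ⟨Finset.mem_product.mpr ⟨hu, Finset.mem_product.mpr ⟨hv, hw⟩⟩, hb.1, hb.2, hP⟩, rfl⟩
    · have : blkLt s u v * blkLt s v w = 0 := by
        unfold blkLt
        rcases not_and_or.mp hb with h | h <;> simp [h]
      rw [this, zero_mul, mul_zero]
  · rw [if_neg hP]
    have := blkLt_nonneg s
    split_ifs
    · exact mul_nonneg zero_le_one (mul_nonneg (mul_nonneg (this _ _) (this _ _)) (this _ _))
    · simp

/-- The number of orders of `x, y, z` which are increasing in the blocks: it is at most one, and it
is one unless two of the points lie in a common block. -/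
theorem six_orders_blkLt {s x y z : ℕ} {O : ℕ → ℕ → ℕ → ℝ}
    (hO : O = fun u v w => blkLt s u v * blkLt s v w * blkLt s u w) :
    O x y z + O x z y + O y x z + O y z x + O z x y + O z y x ≤ 1 ∧
    1 - ((if x / s = y / s then 1 else 0) + (if y / s = z / s then 1 else 0) +
      (if x / s = z / s then 1 else 0)) ≤
      O x y z + O x z y + O y x z + O y z x + O z x y + O z y x := by
  subst hO
  simp only [blkLt]
  generalize x / s = a
  generalize y / s = b
  generalize z / s = c
  rcases lt_trichotomy a b with h1 | h1 | h1 <;> rcases lt_trichotomy b c with h2 | h2 | h2 <;>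
    rcases lt_trichotomy a c with h3 | h3 | h3 <;>
    first
      | (exfalso; omega)
      | (simp [h1, h2, h3, h1.not_gt, h2.not_gt, h3.not_gt, h1.ne, h2.ne, h3.ne, h1.ne', h2.ne',
          h3.ne'])
      | (split_ifs <;> first | (exfalso; omega) | norm_num)

theorem sum_same_block_le (K s x : ℕ) :
    ∑ y ∈ Finset.range (K * s), (if x / s = y / s then (1 : ℝ) else 0) ≤ s := by
  have e := sum_range_mul_blocks K s (fun b => if x / s = b then 1 else 0) (fun _ => 1)
  simp only [mul_one, Finset.sum_const, Finset.card_range, nsmul_eq_mul, Finset.sum_ite_eq] at e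
  rw [e]
  refine mul_le_of_le_one_left (Nat.cast_nonneg _) ?_
  split_ifs <;> norm_num

/-- If every colour class is close in cut norm to its density `f a`, then the blow-up 3-graph has
density about `lamVVV P f` between any three vertex sets; the triples meeting a block twice are lost,
but they are few when there are many blocks. -/
theorem eVVV_blkGraph_ge {P : Palette} {K s : ℕ} {col : ℕ → ℕ → ℕ} {f : ℕ → ℝ} {D : ℝ}
    (hf : ∀ a ∈ palColours P, 0 ≤ f a ∧ f a ≤ 1)
    (hreg : ∀ a ∈ palColours P, ∀ α β : ℕ → ℝ, (∀ u, |α u| ≤ 1) → (∀ v, |β v| ≤ 1) →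
      |∑ u ∈ Finset.range (K * s), ∑ v ∈ Finset.range (K * s),
        α u * β v * (colInd col a u v * blkLt s u v - f a * blkLt s u v)| ≤ D)
    {X Y Z : Finset ℕ} (hX : X ⊆ Finset.range (K * s)) (hY : Y ⊆ Finset.range (K * s))
    (hZ : Z ⊆ Finset.range (K * s)) :
    lamVVV P f * X.card * Y.card * Z.card -
        lamVVV P f * (3 * (((K * s : ℕ) : ℝ) ^ 2 * s)) - 18 * P.card * (((K * s : ℕ) : ℝ) * D) ≤
      eVVV (blkGraph P s (K * s) col) X Y Z := by
  obtain ⟨I, hI⟩ : ∃ I, I = Finset.range (K * s) := ⟨_, rfl⟩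
  obtain ⟨N, hN⟩ : ∃ N : ℝ, N = ((K * s : ℕ) : ℝ) := ⟨_, rfl⟩
  obtain ⟨L, hL⟩ : ∃ L, L = lamVVV P f := ⟨_, rfl⟩
  rw [← hI] at hX hY hZ
  rw [← hI] at hreg
  rw [← hN, ← hL]
  have hIcard : (I.card : ℝ) = N := by rw [hI, hN, Finset.card_range]
  have hL0 : 0 ≤ L := hL ▸ lamVVV_nonneg fun a ha => (hf a ha).1
  have hoabs : ∀ u v, |blkLt s u v| ≤ 1 := fun u v =>
    abs_le.mpr ⟨by linarith [blkLt_nonneg s u v], blkLt_le_one s u v⟩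
  have hpabs : ∀ a u v, |colInd col a u v * blkLt s u v| ≤ 1 := fun a u v => by
    rw [abs_mul]
    exact mul_le_one₀ (abs_le.mpr ⟨by linarith [colInd_nonneg col a u v], colInd_le_one col a u v⟩)
      (abs_nonneg _) (hoabs u v)
  have hfabs : ∀ a ∈ palColours P, |f a| ≤ 1 := fun a ha =>
    abs_le.mpr ⟨by linarith [(hf a ha).1], (hf a ha).2⟩
  obtain ⟨O, hO⟩ : ∃ O : ℕ → ℕ → ℕ → ℝ,
      O = fun u v w => blkLt s u v * blkLt s v w * blkLt s u w := ⟨_, rfl⟩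
  obtain ⟨T, hT⟩ : ∃ T : ℕ → ℕ → ℕ → ℝ, T = fun u v w =>
      ∑ p ∈ P, (colInd col p.1 u v * blkLt s u v) * (colInd col p.2.1 v w * blkLt s v w) *
        (colInd col p.2.2 u w * blkLt s u w) := ⟨_, rfl⟩
  obtain ⟨ed, hed⟩ : ∃ ed : ℕ → ℕ → ℕ → ℝ, ed = fun u v w =>
      if ({u, v, w} : Finset ℕ) ∈ (blkGraph P s (K * s) col).edges then (1 : ℝ) else 0 := ⟨_, rfl⟩
  have hed0 : ∀ u v w, 0 ≤ ed u v w := fun u v w => by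
    rw [hed]; dsimp only; split_ifs <;> norm_num
  have hTle : ∀ u ∈ I, ∀ v ∈ I, ∀ w ∈ I, T u v w ≤ ed u v w * O u v w := by
    intro u hu v hv w hw
    rw [hI] at hu hv hw
    rw [hT, hed, hO]
    exact sum_palette_le_edge hu hv hw
  -- the estimate for one order of the vertices
  have hone : ∀ α β γ : ℕ → ℝ, (∀ u, |α u| ≤ 1) → (∀ u, |β u| ≤ 1) → (∀ u, |γ u| ≤ 1) →
      -(P.card * (3 * (N * D))) ≤
        ∑ u ∈ I, ∑ v ∈ I, ∑ w ∈ I, α u * β v * γ w * (T u v w - L * O u v w) := by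
    intro α β γ hα hβ hγ
    have e : ∑ u ∈ I, ∑ v ∈ I, ∑ w ∈ I, α u * β v * γ w * (T u v w - L * O u v w) =
        ∑ p ∈ P, ∑ u ∈ I, ∑ v ∈ I, ∑ w ∈ I, α u * β v * γ w *
          ((colInd col p.1 u v * blkLt s u v) * (colInd col p.2.1 v w * blkLt s v w) *
            (colInd col p.2.2 u w * blkLt s u w) -
            f p.1 * f p.2.1 * f p.2.2 * (blkLt s u v * blkLt s v w * blkLt s u w)) := by
      symm
      rw [Finset.sum_comm]
      refine Finset.sum_congr rfl fun u _ => ?_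
      rw [Finset.sum_comm]
      refine Finset.sum_congr rfl fun v _ => ?_
      rw [Finset.sum_comm]
      refine Finset.sum_congr rfl fun w _ => ?_
      rw [← Finset.mul_sum, Finset.sum_sub_distrib, ← Finset.sum_mul, hT, hO, hL]
      rfl
    rw [e, ← mul_neg, ← nsmul_eq_mul, ← Finset.sum_const, ← hIcard]
    refine Finset.sum_le_sum fun p hp => ?_
    obtain ⟨m1, m2, m3⟩ := mem_palColours hp
    exact triangle_count_ge hoabs (hpabs _) (hpabs _) (hfabs _ m1) (hfabs _ m2)
      (hreg _ m1) (hreg _ m2) (hreg _ m3) hα hβ hγ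
  have hind : ∀ (S : Finset ℕ) (x : ℕ), |if x ∈ S then (1 : ℝ) else 0| ≤ 1 := fun S x => by
    split_ifs <;> simp
  have hsix := sum_six_orders hone (hind X) (hind Y) (hind Z)
  have hpt : ∀ x ∈ I, ∀ y ∈ I, ∀ z ∈ I,
      (if x ∈ X then (1 : ℝ) else 0) * (if y ∈ Y then 1 else 0) * (if z ∈ Z then 1 else 0) *
        ((T x y z - L * O x y z) + (T x z y - L * O x z y) + (T y x z - L * O y x z) +
          (T y z x - L * O y z x) + (T z x y - L * O z x y) + (T z y x - L * O z y x)) ≤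
      (if x ∈ X then if y ∈ Y then if z ∈ Z then ed x y z - L else 0 else 0 else 0) +
        L * ((if x / s = y / s then 1 else 0) + (if y / s = z / s then 1 else 0) +
          (if x / s = z / s then 1 else 0)) := by
    intro x hx y hy z hz
    have hb : (0 : ℝ) ≤ (if x / s = y / s then 1 else 0) + (if y / s = z / s then 1 else 0) +
        (if x / s = z / s then 1 else 0) := by
      refine add_nonneg (add_nonneg ?_ ?_) ?_ <;> split_ifs <;> norm_num
    by_cases h1 : x ∈ X
    · by_cases h2 : y ∈ Y
      · by_cases h3 : z ∈ Z
        · simp only [h1, h2, h3, if_true, one_mul]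
          obtain ⟨s1, s2⟩ := six_orders_blkLt (x := x) (y := y) (z := z) hO
          have p1 : ed x z y = ed x y z := by rw [hed]; simp only [Finset.pair_comm z y]
          have p2 : ed y x z = ed x y z := by rw [hed]; simp only [Finset.insert_comm y x]
          have p3 : ed y z x = ed x y z := by
            rw [hed]; simp only [Finset.pair_comm z x, Finset.insert_comm y x]
          have p4 : ed z x y = ed x y z := by
            rw [hed]; simp only [Finset.insert_comm z x, Finset.pair_comm z y]
          have p5 : ed z y x = ed x y z := by
            rw [hed]
            simp only [Finset.pair_comm y x, Finset.insert_comm z x, Finset.pair_comm z y]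
          have q0 := hTle x hx y hy z hz
          have q1 := hTle x hx z hz y hy
          have q2 := hTle y hy x hx z hz
          have q3 := hTle y hy z hz x hx
          have q4 := hTle z hz x hx y hy
          have q5 := hTle z hz y hy x hx
          rw [p1] at q1
          rw [p2] at q2
          rw [p3] at q3
          rw [p4] at q4
          rw [p5] at q5
          have r1 := mul_le_mul_of_nonneg_left s1 (hed0 x y z)
          have r2 := mul_le_mul_of_nonneg_left s2 hL0
          linarith
        · simp only [h3, if_false, mul_zero, zero_mul, ite_self, zero_add]
          exact mul_nonneg hL0 hb
      · simp only [h2, if_false, mul_zero, zero_mul, ite_self, zero_add]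
        exact mul_nonneg hL0 hb
    · simp only [h1, if_false, zero_mul, zero_add]
      exact mul_nonneg hL0 hb
  have hsum := hsix.trans (Finset.sum_le_sum fun x hx => Finset.sum_le_sum fun y hy =>
    Finset.sum_le_sum fun z hz => hpt x hx y hy z hz)
  have hmain : ∑ x ∈ I, ∑ y ∈ I, ∑ z ∈ I,
      (if x ∈ X then if y ∈ Y then if z ∈ Z then ed x y z - L else 0 else 0 else 0) =
      eVVV (blkGraph P s (K * s) col) X Y Z - L * X.card * Y.card * Z.card := by
    have e1 : ∀ x y, ∑ z ∈ I,
        (if x ∈ X then if y ∈ Y then if z ∈ Z then ed x y z - L else 0 else 0 else 0) =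
        if x ∈ X then if y ∈ Y then ∑ z ∈ Z, (ed x y z - L) else 0 else 0 := by
      intro x y
      split_ifs
      · rw [Finset.sum_ite_mem, Finset.inter_eq_right.mpr hZ]
      · simp
      · simp
    have e2 : ∀ x, ∑ y ∈ I,
        (if x ∈ X then if y ∈ Y then ∑ z ∈ Z, (ed x y z - L) else 0 else 0) =
        if x ∈ X then ∑ y ∈ Y, ∑ z ∈ Z, (ed x y z - L) else 0 := by
      intro x
      split_ifs
      · rw [Finset.sum_ite_mem, Finset.inter_eq_right.mpr hY]
      · simp
    simp only [e1, e2]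
    rw [Finset.sum_ite_mem, Finset.inter_eq_right.mpr hX, eVVV_eq_sum, hed]
    simp only [Finset.sum_sub_distrib, Finset.sum_const, nsmul_eq_mul]
    ring
  have hblk : ∑ x ∈ I, ∑ y ∈ I, ∑ z ∈ I,
      L * ((if x / s = y / s then 1 else 0) + (if y / s = z / s then 1 else 0) +
        (if x / s = z / s then 1 else 0)) ≤ L * (3 * (N ^ 2 * s)) := by
    have e0 : ∀ F : ℕ → ℕ → ℕ → ℝ, (∀ x y, ∑ z ∈ I, F x y z ≤ s) →
        ∑ x ∈ I, ∑ y ∈ I, ∑ z ∈ I, F x y z ≤ N ^ 2 * s := by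
      intro F hF
      refine (Finset.sum_le_sum fun x _ => Finset.sum_le_sum fun y _ => hF x y).trans
        (le_of_eq ?_)
      simp only [Finset.sum_const, nsmul_eq_mul, hIcard]
      ring
    have b1 := e0 (fun x z y => if x / s = y / s then 1 else 0)
      fun x _ => hI ▸ sum_same_block_le K s x
    rw [Finset.sum_congr rfl fun x _ => Finset.sum_comm] at b1
    have b2 := e0 (fun _ y z => if y / s = z / s then 1 else 0)
      fun _ y => hI ▸ sum_same_block_le K s y
    have b3 := e0 (fun x _ z => if x / s = z / s then 1 else 0)
      fun x _ => hI ▸ sum_same_block_le K s x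
    simp only [← Finset.mul_sum, Finset.sum_add_distrib]
    exact mul_le_mul_of_nonneg_left (by linarith) hL0
  simp only [Finset.sum_add_distrib] at hsum hblk
  rw [hmain] at hsum
  linarith

/-- The frequency of the colour `a` in the finite multiset of colours listed by `g`. -/
noncomputable def colFreq {Q : Type*} [Fintype Q] (g : Q → ℕ) (a : ℕ) : ℝ :=
  (∑ q, if g q = a then (1 : ℝ) else 0) / Fintype.card Q

theorem colFreq_mem_Icc {Q : Type*} [Fintype Q] [Nonempty Q] (g : Q → ℕ) (a : ℕ) :
    0 ≤ colFreq g a ∧ colFreq g a ≤ 1 := by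
  have hc : (0 : ℝ) < Fintype.card Q := by exact_mod_cast Fintype.card_pos
  constructor
  · exact div_nonneg (Finset.sum_nonneg fun q _ => by split_ifs <;> norm_num) hc.le
  · refine (div_le_one hc).mpr ?_
    calc _ ≤ ∑ q : Q, (1 : ℝ) := Finset.sum_le_sum fun q _ => by split_ifs <;> norm_num
      _ = _ := by simp

theorem colFreq_isWeighting {P : Palette} {Q : Type*} [Fintype Q] [Nonempty Q] {g : Q → ℕ}
    (hg : ∀ q, g q ∈ palColours P) : IsWeighting P (colFreq g) := by
  have hc : (0 : ℝ) < Fintype.card Q := by exact_mod_cast Fintype.card_pos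
  refine ⟨fun a _ => (colFreq_mem_Icc g a).1, ?_⟩
  unfold colFreq
  rw [← Finset.sum_div, Finset.sum_comm, div_eq_one_iff_eq hc.ne']
  simp [hg]

theorem exists_dense_of_colFreq {P : Palette} {Q : Type*} [Fintype Q] [Nonempty Q] {g : Q → ℕ}
    (hg : ∀ q, g q ∈ palColours P) {η : ℝ} (hη : 0 < η) (n : ℕ) :
    ∃ H : ThreeGraph, n ≤ H.verts.card ∧ Satisfies H P ∧
      IsDenseVVV H (lamVVV P (colFreq g)) η := by
  have hw := colFreq_isWeighting hg
  obtain ⟨K, hK⟩ := exists_nat_gt (6 / η)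
  have hK0 : (0 : ℝ) < K := lt_trans (by positivity) hK
  have hK1 : 1 ≤ K := by exact_mod_cast hK0
  obtain ⟨δ, hδ⟩ : ∃ δ : ℝ, δ = η / (36 * (P.card + 1)) := ⟨_, rfl⟩
  have hδ0 : 0 < δ := by rw [hδ]; positivity
  obtain ⟨m₀, hm₀⟩ := exists_nat_gt (1 / δ ^ 2)
  obtain ⟨m, hm⟩ : ∃ m, m = m₀ + n + 1 := ⟨_, rfl⟩
  have hmδ : 1 ≤ δ ^ 2 * m := by
    have h1 : (m₀ : ℝ) ≤ m := by rw [hm]; exact_mod_cast by omega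
    have h2 : 1 / δ ^ 2 ≤ m := hm₀.le.trans h1
    rwa [div_le_iff₀ (by positivity), mul_comm] at h2
  have hm0 : (0 : ℝ) < m := by rw [hm]; exact_mod_cast Nat.succ_pos _
  obtain ⟨s, c, hms, hc⟩ := exists_quasirandom Q K m (by omega)
  obtain ⟨N, hN⟩ : ∃ N : ℝ, N = ((K * s : ℕ) : ℝ) := ⟨_, rfl⟩
  have hN0 : 0 ≤ N := hN ▸ Nat.cast_nonneg _
  have hreg : ∀ a ∈ palColours P, ∀ α β : ℕ → ℝ, (∀ u, |α u| ≤ 1) → (∀ v, |β v| ≤ 1) →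
      |∑ u ∈ Finset.range (K * s), ∑ v ∈ Finset.range (K * s),
        α u * β v * (colInd (fun u v => g (c u v)) a u v * blkLt s u v -
          colFreq g a * blkLt s u v)| ≤ δ * N ^ 2 := by
    intro a _ α β hα hβ
    have h0 : ∑ q, ((if g q = a then (1 : ℝ) else 0) - colFreq g a) = 0 := by
      have hcard : (Fintype.card Q : ℝ) ≠ 0 := by exact_mod_cast Fintype.card_ne_zero
      rw [Finset.sum_sub_distrib, Finset.sum_const, nsmul_eq_mul, Finset.card_univ, colFreq,
        mul_div_cancel₀ _ hcard, sub_self]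
    have h1 : ∀ q, |(if g q = a then (1 : ℝ) else 0) - colFreq g a| ≤ 1 := by
      intro q
      obtain ⟨f0, f1⟩ := colFreq_mem_Icc g a
      rw [abs_le]
      split_ifs <;> constructor <;> linarith
    have h2 := hc (fun q => (if g q = a then (1 : ℝ) else 0) - colFreq g a) h0 h1 α β hα hβ
    simp only [sub_mul] at h2
    rw [← hN] at h2
    refine abs_le_of_sq_le_sq (le_of_mul_le_mul_right (h2.trans ?_) hm0) (by positivity)
    calc N ^ 4 = N ^ 4 * 1 := (mul_one _).symm
      _ ≤ N ^ 4 * (δ ^ 2 * m) := mul_le_mul_of_nonneg_left hmδ (by positivity)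
      _ = _ := by ring
  refine ⟨blkGraph P s (K * s) fun u v => g (c u v), ?_,
    blkGraph_satisfies s (K * s) fun u v => hg _, ?_⟩
  · change n ≤ (Finset.range (K * s)).card
    rw [Finset.card_range]
    calc n ≤ s := by omega
      _ ≤ K * s := Nat.le_mul_of_pos_left s hK1
  · intro X Y Z hX hY hZ
    have hv : ((blkGraph P s (K * s) fun u v => g (c u v)).verts.card : ℝ) = N := by
      rw [hN]; change ((Finset.range (K * s)).card : ℝ) = _
      rw [Finset.card_range]
    rw [hv]
    have hge := eVVV_blkGraph_ge (fun a _ => colFreq_mem_Icc g a) hreg hX hY hZ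
    rw [← hN] at hge
    have hs : 6 * (s : ℝ) ≤ η * N := by
      have : 6 ≤ η * K := by
        have := (div_lt_iff₀ hη).mp hK
        linarith
      calc 6 * (s : ℝ) ≤ η * K * s := mul_le_mul_of_nonneg_right this (Nat.cast_nonneg _)
        _ = η * N := by rw [hN]; push_cast; ring
    have b1 : lamVVV P (colFreq g) * (3 * (N ^ 2 * s)) ≤ η / 2 * N ^ 3 := by
      refine (mul_le_of_le_one_left (by positivity) hw.lamVVV_le_one).trans ?_
      have := mul_le_mul_of_nonneg_left hs (sq_nonneg N)
      linarith
    have b2 : 18 * P.card * (N * (δ * N ^ 2)) ≤ η / 2 * N ^ 3 := by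
      have h1 : 36 * ((P.card : ℝ) + 1) * δ = η := by rw [hδ]; field_simp
      have h2 : 18 * (P.card : ℝ) * δ ≤ η / 2 := by linarith
      calc _ = 18 * P.card * δ * N ^ 3 := by ring
        _ ≤ _ := mul_le_mul_of_nonneg_right h2 (by positivity)
    linarith

/-! ### Rational approximation and the conclusion -/

theorem exists_colFreq_gt {P : Palette} {x : ℕ → ℝ} (hx : IsWeighting P x) {τ : ℝ} (hτ : 0 < τ) :
    ∃ (Q : Type) (_ : Fintype Q) (_ : Nonempty Q) (g : Q → ℕ), (∀ q, g q ∈ palColours P) ∧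
      lamVVV P x - τ < lamVVV P (colFreq g) := by
  have hlim : ∀ a ∈ palColours P,
      Filter.Tendsto (fun t : ℝ => (⌊x a * t⌋₊ : ℝ) / t) Filter.atTop (nhds (x a)) :=
    fun a ha => tendsto_nat_floor_mul_div_atTop (hx.1 a ha)
  have hlam : Filter.Tendsto (fun t : ℝ => lamVVV P fun a => (⌊x a * t⌋₊ : ℝ) / t) Filter.atTop
      (nhds (lamVVV P x)) := by
    unfold lamVVV
    refine tendsto_finsetSum _ fun p hp => ?_
    obtain ⟨m1, m2, m3⟩ := mem_palColours hp
    exact ((hlim _ m1).mul (hlim _ m2)).mul (hlim _ m3)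
  have hsum : Filter.Tendsto (fun t : ℝ => ∑ a ∈ palColours P, (⌊x a * t⌋₊ : ℝ) / t) Filter.atTop
      (nhds 1) := by
    rw [← hx.2]
    exact tendsto_finsetSum _ hlim
  obtain ⟨t, ⟨h1, h2⟩, ht⟩ := (((hlam.eventually (lt_mem_nhds (sub_lt_self _ hτ))).and
    (hsum.eventually (lt_mem_nhds zero_lt_one))).and (Filter.eventually_gt_atTop 0)).exists
  have hcard : (Fintype.card (Σ a : palColours P, Fin ⌊x a * t⌋₊) : ℝ) =
      ∑ a ∈ palColours P, (⌊x a * t⌋₊ : ℝ) := by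
    rw [Fintype.card_sigma]
    simp only [Fintype.card_fin]
    push_cast
    exact Finset.sum_coe_sort (palColours P) fun a => (⌊x a * t⌋₊ : ℝ)
  have hpos : (0 : ℝ) < Fintype.card (Σ a : palColours P, Fin ⌊x a * t⌋₊) := by
    rw [← Finset.sum_div] at h2
    rw [hcard]
    exact (div_pos_iff_of_pos_right ht).mp h2
  have hle : (Fintype.card (Σ a : palColours P, Fin ⌊x a * t⌋₊) : ℝ) ≤ t := by
    rw [hcard]
    calc _ ≤ ∑ a ∈ palColours P, x a * t := Finset.sum_le_sum fun a ha =>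
          Nat.floor_le (mul_nonneg (hx.1 a ha) ht.le)
      _ = t := by rw [← Finset.sum_mul, hx.2, one_mul]
  refine ⟨Σ a : palColours P, Fin ⌊x a * t⌋₊, inferInstance,
    Fintype.card_pos_iff.mp (by exact_mod_cast hpos), fun q => q.1, fun q => q.1.2, ?_⟩
  refine h1.trans_le ?_
  have hfr : ∀ a ∈ palColours P, (⌊x a * t⌋₊ : ℝ) / t ≤
      colFreq (fun q : Σ a : palColours P, Fin ⌊x a * t⌋₊ => (q.1 : ℕ)) a := by
    intro a ha
    unfold colFreq
    have e : (∑ q : Σ a : palColours P, Fin ⌊x a * t⌋₊, if (q.1 : ℕ) = a then (1 : ℝ) else 0) =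
        ⌊x a * t⌋₊ := by
      have e1 : ∀ b : palColours P, ∑ _i : Fin ⌊x b * t⌋₊, (if (b : ℕ) = a then (1 : ℝ) else 0) =
          if (b : ℕ) = a then (⌊x b * t⌋₊ : ℝ) else 0 := fun b => by
        rw [Finset.sum_const, Finset.card_univ, Fintype.card_fin, nsmul_eq_mul]
        simp
      rw [Fintype.sum_sigma]
      refine (Finset.sum_congr rfl fun b _ => e1 b).trans ?_
      rw [Finset.sum_coe_sort (palColours P)
        (fun b => if b = a then (⌊x b * t⌋₊ : ℝ) else 0), Finset.sum_ite_eq', if_pos ha]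
    rw [e]
    exact div_le_div_of_nonneg_left (Nat.cast_nonneg _) hpos hle
  have hnn : ∀ a, 0 ≤ (⌊x a * t⌋₊ : ℝ) / t := fun a => div_nonneg (Nat.cast_nonneg _) ht.le
  unfold lamVVV
  refine Finset.sum_le_sum fun p hp => ?_
  obtain ⟨m1, m2, m3⟩ := mem_palColours hp
  exact mul_le_mul (mul_le_mul (hfr _ m1) (hfr _ m2) (hnn _) ((hnn _).trans (hfr _ m1)))
    (hfr _ m3) (hnn _) (mul_nonneg ((hnn _).trans (hfr _ m1)) ((hnn _).trans (hfr _ m2)))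

theorem exists_isWeighting {P : Palette} (hP : P.Nonempty) : ∃ x, IsWeighting P x := by
  obtain ⟨p, hp⟩ := hP
  refine ⟨fun a => if a = p.1 then 1 else 0, fun a _ => by dsimp only; split_ifs <;> norm_num, ?_⟩
  rw [Finset.sum_ite_eq', if_pos (mem_palColours hp).1]

/-- For nonempty `P`, the family of all 3-graphs not satisfying `P` has uniform Turán density
`LambdaVVV P`. -/
theorem piVVV_not_satisfies {P : Palette} (hP : P.Nonempty) :
    piVVV {F | ¬ Satisfies F P} = LambdaVVV P := by
  have hfree : ∀ H : ThreeGraph,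
      (∀ F ∈ {F | ¬ Satisfies F P}, ¬ IsSubhypergraph F H) ↔ Satisfies H P := fun H =>
    ⟨fun h => by_contra fun hH => h H hH (IsSubhypergraph.refl H),
      fun h F hF hFH => hF (h.of_isSubhypergraph hFH)⟩
  unfold piVVV
  simp only [hfree]
  -- the densities given by rational weightings are attained
  have hmem : ∀ (x : ℕ → ℝ), IsWeighting P x → ∀ τ : ℝ, 0 < τ →
      ∃ l ∈ {d : ℝ | 0 ≤ d ∧ d ≤ 1 ∧ ∀ η : ℝ, 0 < η → ∀ n : ℕ,
        ∃ H : ThreeGraph, n ≤ H.verts.card ∧ Satisfies H P ∧ IsDenseVVV H d η},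
        lamVVV P x - τ < l := by
    intro x hx τ hτ
    obtain ⟨Q, _, _, g, hg, hl⟩ := exists_colFreq_gt hx hτ
    have hw := colFreq_isWeighting hg
    exact ⟨_, ⟨lamVVV_nonneg hw.1, hw.lamVVV_le_one, fun η hη n =>
      exists_dense_of_colFreq hg hη n⟩, hl⟩
  obtain ⟨x₀, hx₀⟩ := exists_isWeighting hP
  apply le_antisymm
  · obtain ⟨l, hl, -⟩ := hmem x₀ hx₀ 1 one_pos
    exact csSup_le ⟨l, hl⟩ fun d hd => density_le hP hd.2.2
  · refine csSup_le ⟨_, x₀, hx₀, rfl⟩ ?_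
    rintro l ⟨x, hx, rfl⟩
    refine le_of_forall_pos_le_add fun τ hτ => ?_
    obtain ⟨l, hl, hlt⟩ := hmem x hx τ hτ
    have := le_csSup ⟨1, fun d hd => hd.2.1⟩ hl
    linarith

/-- For every palette 𝒫 there is a family 𝓕 with π_▽(𝓕) = Λ^▽_𝒫. -/
theorem paletteLagrangianVVV_mem_PiVVV (P : Palette) :
    ∃ 𝓕 : Set ThreeGraph, piVVV 𝓕 = LambdaVVV P := by
  rcases P.eq_empty_or_nonempty with rfl | hP
  · -- both suprema are over the empty set: every 3-graph contains itself, and there is no weighting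
    refine ⟨Set.univ, ?_⟩
    have h1 : piVVV Set.univ = 0 := by
      unfold piVVV
      rw [Set.eq_empty_of_forall_notMem (s := {d : ℝ | _}), Real.sSup_empty]
      rintro d ⟨-, -, hd⟩
      obtain ⟨H, -, hH, -⟩ := hd 1 one_pos 0
      exact hH H (Set.mem_univ _) (IsSubhypergraph.refl H)
    have h2 : LambdaVVV ∅ = 0 := by
      unfold LambdaVVV
      rw [Set.eq_empty_of_forall_notMem (s := {l : ℝ | _}), Real.sSup_empty]
      rintro l ⟨x, hx, -⟩
      simpa [palColours] using hx.2
    rw [h1, h2]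
  · exact ⟨_, piVVV_not_satisfies hP⟩
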